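/- arXiv:2306.15293 — 2 statements merged into one kernel-verified Lean document; each statement's English description precedes it below -/
import Mathlib

section
/- Let n ≥ 2, let m > 2, and let K₁, …, K_m ⊆ ℝⁿ be convex bodies. Then vol((∂K₁ + ⋯ + ∂K_m)/m) = (vol(K₁)·⋯·vol(K_m))^{1/m} holds if and only if K₁, …, K_m are all translates of one another. -/
open MeasureTheory Pointwise

/-!
Write `r K` for the `d`-th root of the measure of `K`, where `d` is the dimension, so that `r` is
superadditive by the Brunn–Minkowski inequality. Let `K j` have the largest measure. Since the
frontier of a convex body is connected, a point of `∑ K i` that is missed by `∑ frontier (K i)`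
translates `-∑ i ≠ j, K i` into `K j`. If such points exist, then `b = ∑ i ≠ j, r (K i)` is at most
`a = r (K j)`, and the set of missed points has radius at most `a - b`, whereas `r (∑ K i)` is at
least `a + b`. Hence `r (∑ frontier (K i)) ≥ 2 * √(a * b)`, which for more than two bodies strictly
exceeds `m` times the geometric mean of the `r (K i)`.

In the equality case the two sums therefore agree, and equality holds both in the inequality of
arithmetic and geometric means and in the Brunn–Minkowski inequality for each pair of bodies. For
the latter, the marginals of the two bodies along every linear functional satisfy a one-dimensional
Prékopa–Leindler inequality whose equality case makes them translates of each other. Subtracting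
the barycenters makes all marginals equal, so the bodies agree by uniqueness of characteristic
functions. Conversely, if all bodies are translates of one another, a missed point would give
`(m - 1) * r ≤ r`.
-/

namespace BoundarySum

open Set Filter Topology ProbabilityTheory
open scoped ENNReal

section PrekopaLeindler

theorem rpow_mul_rpow_le_ofReal_mul_add {p q : ℝ} (hp : 0 < p) (hq : 0 < q) (hpq : p + q = 1)
    (a b : ℝ≥0∞) : a ^ p * b ^ q ≤ ENNReal.ofReal p * a + ENNReal.ofReal q * b := by
  rcases eq_or_ne a ⊤ with rfl | ha
  · simp [ENNReal.mul_top, hp]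
  rcases eq_or_ne b ⊤ with rfl | hb
  · simp [ENNReal.mul_top, hq]
  lift a to NNReal using ha
  lift b to NNReal using hb
  lift p to NNReal using hp.le
  lift q to NNReal using hq.le
  rw [ENNReal.ofReal_coe_nnreal, ENNReal.ofReal_coe_nnreal,
    ← ENNReal.coe_rpow_of_nonneg _ p.coe_nonneg, ← ENNReal.coe_rpow_of_nonneg _ q.coe_nonneg]
  exact_mod_cast NNReal.geom_mean_le_arith_mean2_weighted p q a b (by exact_mod_cast hpq)

theorem volume_add_volume_le_of_isCompact {A B : Set ℝ} (hA : IsCompact A) (hB : IsCompact B)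
    (hA' : A.Nonempty) (hB' : B.Nonempty) : volume A + volume B ≤ volume (A + B) := by
  obtain ⟨a, ha, hmax⟩ := hA.exists_isGreatest hA'
  obtain ⟨b, hb, hmin⟩ := hB.exists_isLeast hB'
  have overlap : AEDisjoint volume (b +ᵥ A) (a +ᵥ B) := by
    refine measure_mono_null (t := {a + b}) ?_ (by simp)
    rintro _ ⟨⟨x, hx, rfl⟩, ⟨y, hy, hxy⟩⟩
    simp only [vadd_eq_add, mem_singleton_iff] at hxy ⊢
    linarith [hmax hx, hmin hy]
  calc volume A + volume B = volume (b +ᵥ A) + volume (a +ᵥ B) := by simp only [measure_vadd]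
    _ = volume ((b +ᵥ A) ∪ (a +ᵥ B)) :=
      (measure_union₀ (hB.vadd a).measurableSet.nullMeasurableSet overlap).symm
    _ ≤ volume (A + B) := measure_mono <| union_subset
      (add_comm B A ▸ vadd_set_subset_add hb) (vadd_set_subset_add ha)

theorem volume_add_volume_le {A B : Set ℝ} (hA : MeasurableSet A) (hB : MeasurableSet B)
    (hA' : A.Nonempty) (hB' : B.Nonempty) : volume A + volume B ≤ volume (A + B) := by
  obtain ⟨a, ha⟩ := hA'
  obtain ⟨b, hb⟩ := hB'
  simp only [hA.measure_eq_iSup_isCompact, hB.measure_eq_iSup_isCompact, iSup_and']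
  refine ENNReal.biSup_add_biSup_le' ⟨∅, by simp⟩ ⟨∅, by simp⟩ fun K ⟨hKA, hK⟩ L ⟨hLB, hL⟩ => ?_
  calc volume K + volume L ≤ volume (insert a K) + volume (insert b L) := by
        gcongr <;> exact subset_insert _ _
    _ ≤ volume (insert a K + insert b L) := volume_add_volume_le_of_isCompact (hK.insert a)
        (hL.insert b) (insert_nonempty a K) (insert_nonempty b L)
    _ ≤ volume (A + B) := measure_mono <|
        add_subset_add (insert_subset ha hKA) (insert_subset hb hLB)

theorem lintegral_eq_lintegral_measure_ofReal_lt {α : Type*} [MeasurableSpace α] {μ : Measure α}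
    {f : α → ℝ≥0∞} (hf : Measurable f) (hf' : ∀ x, f x ≠ ⊤) :
    ∫⁻ x, f x ∂μ = ∫⁻ t in Ioi 0, μ {x | ENNReal.ofReal t < f x} := by
  calc ∫⁻ x, f x ∂μ = ∫⁻ x, ENNReal.ofReal (f x).toReal ∂μ :=
        lintegral_congr fun x => (ENNReal.ofReal_toReal (hf' x)).symm
    _ = ∫⁻ t in Ioi 0, μ {x | t < (f x).toReal} := lintegral_eq_lintegral_meas_lt μ
        (ae_of_all _ fun _ => ENNReal.toReal_nonneg) hf.ennreal_toReal.aemeasurable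
    _ = ∫⁻ t in Ioi 0, μ {x | ENNReal.ofReal t < f x} := setLIntegral_congr_fun
        measurableSet_Ioi fun t ht => by
          simp only [ENNReal.ofReal_lt_iff_lt_toReal (mem_Ioi.1 ht).le (hf' _)]

section Real

variable {p q : ℝ} {f g h : ℝ → ℝ≥0∞}

theorem ofReal_mul_volume_lt_add_le (hp : 0 < p) (hq : 0 < q) (hpq : p + q = 1)
    (hf : Measurable f) (hg : Measurable g)
    (H : ∀ x y, f x ^ p * g y ^ q ≤ h (p • x + q • y)) {t : ℝ≥0∞} (htf : t < ⨆ x, f x)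
    (htg : t < ⨆ x, g x) :
    ENNReal.ofReal p * volume {x | t < f x} + ENNReal.ofReal q * volume {x | t < g x} ≤
      volume {x | t < h x} := by
  have volume_smul {c : ℝ} (hc : 0 < c) (A : Set ℝ) :
      ENNReal.ofReal c * volume A = volume (c • A) := by simp [abs_of_pos hc]
  rw [volume_smul hp, volume_smul hq]
  refine (volume_add_volume_le ((measurableSet_lt measurable_const hf).const_smul₀ p)
    ((measurableSet_lt measurable_const hg).const_smul₀ q) (Nonempty.smul_set (lt_iSup_iff.1 htf))
    (Nonempty.smul_set (lt_iSup_iff.1 htg))).trans (measure_mono ?_)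
  rintro _ ⟨_, ⟨x, hx, rfl⟩, _, ⟨y, hy, rfl⟩, rfl⟩
  calc t = t ^ p * t ^ q := by
        rw [← ENNReal.rpow_add_of_nonneg _ _ hp.le hq.le, hpq, ENNReal.rpow_one]
    _ < f x ^ p * g y ^ q :=
        ENNReal.mul_lt_mul (ENNReal.rpow_lt_rpow hx hp) (ENNReal.rpow_lt_rpow hy hq)
    _ ≤ h (p • x + q • y) := H x y

theorem ofReal_mul_lintegral_add_le (hp : 0 < p) (hq : 0 < q) (hpq : p + q = 1)
    (hf : Measurable f) (hg : Measurable g) (hh : Measurable h)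
    (H : ∀ x y, f x ^ p * g y ^ q ≤ h (p • x + q • y)) (f1 : ⨆ x, f x = 1) (g1 : ⨆ x, g x = 1) :
    ENNReal.ofReal p * (∫⁻ x, f x) + ENNReal.ofReal q * (∫⁻ x, g x) ≤ ∫⁻ x, h x := by
  have hf1 (x) : f x ≤ 1 := f1 ▸ le_iSup f x
  have hg1 (x) : g x ≤ 1 := g1 ▸ le_iSup g x
  have hH (x y) : f x ^ p * g y ^ q ≤ min (h (p • x + q • y)) 1 :=
    le_min (H x y) (mul_le_one' (ENNReal.rpow_le_one (hf1 x) hp.le)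
      (ENNReal.rpow_le_one (hg1 y) hq.le))
  have ne_top_of_le_one {a : ℝ≥0∞} (ha : a ≤ 1) : a ≠ ⊤ := ne_top_of_le_ne_top ENNReal.one_ne_top ha
  have superlevel_measurable (φ : ℝ → ℝ≥0∞) :
      Measurable fun t : ℝ => volume {x | ENNReal.ofReal t < φ x} :=
    Antitone.measurable fun s t hst => measure_mono fun x hx =>
      (ENNReal.ofReal_le_ofReal hst).trans_lt hx
  refine le_trans ?_ (lintegral_mono fun x => min_le_left (h x) 1)
  rw [lintegral_eq_lintegral_measure_ofReal_lt hf fun x => ne_top_of_le_one (hf1 x),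
    lintegral_eq_lintegral_measure_ofReal_lt hg fun x => ne_top_of_le_one (hg1 x),
    lintegral_eq_lintegral_measure_ofReal_lt (hh.min measurable_const) fun x =>
      ne_top_of_le_one (min_le_right _ _), ← lintegral_const_mul _ (superlevel_measurable f),
    ← lintegral_const_mul _ (superlevel_measurable g),
    ← lintegral_add_left ((superlevel_measurable f).const_mul _)]
  refine lintegral_mono fun t => ?_
  rcases lt_or_ge (ENNReal.ofReal t) 1 with ht | ht
  · exact ofReal_mul_volume_lt_add_le hp hq hpq hf hg hH (f1 ▸ ht) (g1 ▸ ht)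
  · simp [(hf1 _).trans ht |>.not_gt, (hg1 _).trans ht |>.not_gt]

theorem lintegral_rpow_mul_le_of_iSup_ne_top (hp : 0 < p) (hq : 0 < q) (hpq : p + q = 1)
    (hf : Measurable f) (hg : Measurable g) (hh : Measurable h)
    (H : ∀ x y, f x ^ p * g y ^ q ≤ h (p • x + q • y)) (f_top : ⨆ x, f x ≠ ⊤)
    (g_top : ⨆ x, g x ≠ ⊤) :
    (∫⁻ x, f x) ^ p * (∫⁻ x, g x) ^ q ≤ ∫⁻ x, h x := by
  rcases eq_or_ne (⨆ x, f x) 0 with f0 | f0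
  · simp [ENNReal.iSup_eq_zero.1 f0, hp]
  rcases eq_or_ne (⨆ x, g x) 0 with g0 | g0
  · simp [ENNReal.iSup_eq_zero.1 g0, hq]
  set M := ⨆ x, f x
  set N := ⨆ x, g x
  have scale (a b : ℝ≥0∞) :
      (M⁻¹ * a) ^ p * (N⁻¹ * b) ^ q = (M ^ p * N ^ q)⁻¹ * (a ^ p * b ^ q) := by
    rw [ENNReal.mul_rpow_of_nonneg _ _ hp.le, ENNReal.mul_rpow_of_nonneg _ _ hq.le,
      ENNReal.inv_rpow, ENNReal.inv_rpow, mul_mul_mul_comm,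
      ← ENNReal.mul_inv (by simp [f0, f_top]) (by simp [f0, f_top])]
  have hR0 : M ^ p * N ^ q ≠ 0 := by simp [f0, g0, f_top, g_top]
  have hR_top : M ^ p * N ^ q ≠ ⊤ := ENNReal.mul_ne_top
    (ENNReal.rpow_ne_top_of_nonneg hp.le f_top) (ENNReal.rpow_ne_top_of_nonneg hq.le g_top)
  have key := ofReal_mul_lintegral_add_le hp hq hpq (hf.const_mul M⁻¹) (hg.const_mul N⁻¹)
    (hh.const_mul (M ^ p * N ^ q)⁻¹) (fun x y => by rw [scale]; gcongr; exact H x y)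
    (by rw [← ENNReal.mul_iSup, ENNReal.inv_mul_cancel f0 f_top])
    (by rw [← ENNReal.mul_iSup, ENNReal.inv_mul_cancel g0 g_top])
  rw [lintegral_const_mul _ hf, lintegral_const_mul _ hg, lintegral_const_mul _ hh] at key
  have := (rpow_mul_rpow_le_ofReal_mul_add hp hq hpq _ _).trans key
  rwa [scale, ENNReal.mul_le_mul_iff_right (ENNReal.inv_ne_zero.2 hR_top)
    (ENNReal.inv_ne_top.2 hR0)] at this

end Real

/-- The Prékopa–Leindler inequality, as a property of a measure on a real vector space. In this form
it passes to products, and hence from `ℝ` to every dimension. -/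
def IsPrekopaLeindler {E : Type*} [AddCommGroup E] [Module ℝ E] [MeasurableSpace E]
    (μ : Measure E) : Prop :=
  ∀ (p q : ℝ), 0 < p → 0 < q → p + q = 1 → ∀ f g h : E → ℝ≥0∞,
    Measurable f → Measurable g → Measurable h →
    (∀ x y, f x ^ p * g y ^ q ≤ h (p • x + q • y)) →
    (∫⁻ x, f x ∂μ) ^ p * (∫⁻ x, g x ∂μ) ^ q ≤ ∫⁻ x, h x ∂μ

theorem tendsto_lintegral_min_natCast {α : Type*} [MeasurableSpace α] {μ : Measure α}
    {f : α → ℝ≥0∞} (hf : Measurable f) :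
    Tendsto (fun n : ℕ => ∫⁻ x, min (f x) n ∂μ) atTop (𝓝 (∫⁻ x, f x ∂μ)) :=
  lintegral_tendsto_of_tendsto_of_monotone (fun n => by fun_prop)
    (ae_of_all _ fun x m n hmn => min_le_min_left _ (by exact_mod_cast hmn))
    (ae_of_all _ fun x => by
      simpa using (tendsto_const_nhds (x := f x)).min ENNReal.tendsto_nat_nhds_top)

theorem isPrekopaLeindler_volume_real : IsPrekopaLeindler (volume : Measure ℝ) := by
  intro p q hp hq hpq f g h hf hg hh H
  rcases eq_or_ne (∫⁻ x, f x) 0 with f0 | f0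
  · simp [f0, hp]
  rcases eq_or_ne (∫⁻ x, g x) 0 with g0 | g0
  · simp [g0, hq]
  have iSup_min_ne_top (φ : ℝ → ℝ≥0∞) (n : ℕ) : ⨆ x, min (φ x) n ≠ ⊤ :=
    ne_top_of_le_ne_top (ENNReal.natCast_ne_top n) (iSup_le fun x => min_le_right _ _)
  have lim := ENNReal.Tendsto.mul
    ((ENNReal.continuous_rpow_const.tendsto _).comp (tendsto_lintegral_min_natCast hf))
    (Or.inl (by simp [f0, hp.le, hp]))
    ((ENNReal.continuous_rpow_const.tendsto _).comp (tendsto_lintegral_min_natCast hg))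
    (Or.inl (by simp [g0, hq.le, hq])) (a := (∫⁻ x, f x) ^ p) (b := (∫⁻ x, g x) ^ q)
  refine le_of_tendsto' lim fun n => lintegral_rpow_mul_le_of_iSup_ne_top hp hq hpq
    (by fun_prop) (by fun_prop) hh (fun x y => le_trans ?_ (H x y)) (iSup_min_ne_top f n)
    (iSup_min_ne_top g n)
  gcongr <;> exact min_le_left _ _

namespace IsPrekopaLeindler

variable {E F : Type*} [AddCommGroup E] [Module ℝ E] [MeasurableSpace E] [AddCommGroup F]
  [Module ℝ F] [MeasurableSpace F] {μ : Measure E} {ν : Measure F}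

theorem prod [SFinite ν] (hμ : IsPrekopaLeindler μ) (hν : IsPrekopaLeindler ν) :
    IsPrekopaLeindler (μ.prod ν) := by
  intro p q hp hq hpq f g h hf hg hh H
  rw [lintegral_prod _ hf.aemeasurable, lintegral_prod _ hg.aemeasurable,
    lintegral_prod _ hh.aemeasurable]
  refine hμ p q hp hq hpq _ _ _ hf.lintegral_prod_right' hg.lintegral_prod_right'
    hh.lintegral_prod_right' fun x y => ?_
  exact hν p q hp hq hpq _ _ _ (by fun_prop) (by fun_prop) (by fun_prop)
    fun z w => H (x, z) (y, w)

theorem of_measurePreserving (hν : IsPrekopaLeindler ν) (e : F →ₗ[ℝ] E)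
    (he : MeasurePreserving e ν μ) : IsPrekopaLeindler μ := by
  intro p q hp hq hpq f g h hf hg hh H
  rw [← he.lintegral_comp hf, ← he.lintegral_comp hg, ← he.lintegral_comp hh]
  refine hν p q hp hq hpq _ _ _ (hf.comp he.measurable) (hg.comp he.measurable)
    (hh.comp he.measurable) fun x y => ?_
  simpa using H (e x) (e y)

theorem smul (hμ : IsPrekopaLeindler μ) (c : ℝ≥0∞) : IsPrekopaLeindler (c • μ) := by
  intro p q hp hq hpq f g h hf hg hh H
  have hc : c ^ p * c ^ q = c := by
    rw [← ENNReal.rpow_add_of_nonneg _ _ hp.le hq.le, hpq, ENNReal.rpow_one]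
  simp only [lintegral_smul_measure, smul_eq_mul]
  rw [ENNReal.mul_rpow_of_nonneg _ _ hp.le, ENNReal.mul_rpow_of_nonneg _ _ hq.le,
    mul_mul_mul_comm, hc]
  gcongr
  exact hμ p q hp hq hpq f g h hf hg hh H

theorem measure_rpow_mul_le (hμ : IsPrekopaLeindler μ)
    {p q : ℝ} (hp : 0 < p) (hq : 0 < q) (hpq : p + q = 1) {A B C : Set E} (hA : MeasurableSet A)
    (hB : MeasurableSet B) (hC : MeasurableSet C) (hABC : p • A + q • B ⊆ C) :
    μ A ^ p * μ B ^ q ≤ μ C := by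
  have key := hμ p q hp hq hpq (A.indicator 1) (B.indicator 1) (C.indicator 1)
    (measurable_one.indicator hA) (measurable_one.indicator hB) (measurable_one.indicator hC)
    fun x y => ?_
  · simpa [lintegral_indicator_one, hA, hB, hC] using key
  by_cases hx : x ∈ A; swap
  · simp [hx, hp]
  by_cases hy : y ∈ B; swap
  · simp [hy, hq]
  have : p • x + q • y ∈ C := hABC (add_mem_add (smul_mem_smul_set hx) (smul_mem_smul_set hy))
  simp [hx, hy, this]

end IsPrekopaLeindler

theorem isPrekopaLeindler_volume_pi : ∀ n : ℕ, IsPrekopaLeindler (volume : Measure (Fin n → ℝ))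
  | 0 => by
    intro p q _ _ _ f g h _ _ _ H
    rw [volume_pi, Measure.pi_of_empty _ 0]
    simpa using H 0 0
  | n + 1 => by
    refine (isPrekopaLeindler_volume_real.prod
      (isPrekopaLeindler_volume_pi n)).of_measurePreserving
      (Fin.consLinearEquiv ℝ fun _ : Fin (n + 1) => ℝ).toLinearMap ?_
    have hcons : ⇑(Fin.consLinearEquiv ℝ fun _ : Fin (n + 1) => ℝ).toLinearMap =
        (MeasurableEquiv.piFinSuccAbove (fun _ => ℝ) 0).symm := by
      rw [MeasurableEquiv.piFinSuccAbove]
      ext x : 1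
      simp only [LinearEquiv.coe_coe, Fin.insertNthEquiv_zero, MeasurableEquiv.symm_mk,
        Equiv.symm_symm, MeasurableEquiv.coe_mk]
      rfl
    rw [hcons]
    exact (volume_preserving_piFinSuccAbove (fun _ => ℝ) 0).symm

variable {E : Type*} [NormedAddCommGroup E] [NormedSpace ℝ E] [FiniteDimensional ℝ E]
  [MeasurableSpace E] [BorelSpace E] (μ : Measure E) [μ.IsAddHaarMeasure]

theorem isPrekopaLeindler_of_isAddHaarMeasure : IsPrekopaLeindler μ := by
  let e := (Module.finBasis ℝ E).equivFunL.symm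
  let ν : Measure E := volume.map e
  have : ν.IsAddHaarMeasure := e.isAddHaarMeasure_map volume
  have hν : IsPrekopaLeindler ν := (isPrekopaLeindler_volume_pi _).of_measurePreserving
    e.toLinearEquiv.toLinearMap ⟨e.continuous.measurable, rfl⟩
  rw [Measure.isAddLeftInvariant_eq_smul μ ν]
  exact hν.smul _

end PrekopaLeindler

section BrunnMinkowski

variable {E : Type*} [NormedAddCommGroup E] [NormedSpace ℝ E] [MeasurableSpace E]

/-- The radius of a set, normalised so that it is homogeneous of degree one: the `d`-th root of
its measure in a space of dimension `d`. In these terms the Brunn–Minkowski inequality says that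
`volRadius μ` is superadditive. -/
noncomputable def volRadius (μ : Measure E) (A : Set E) : ℝ :=
  μ.real A ^ (Module.finrank ℝ E : ℝ)⁻¹

variable {μ : Measure E} {A B : Set E}

theorem volRadius_nonneg : 0 ≤ volRadius μ A := Real.rpow_nonneg measureReal_nonneg _

theorem volRadius_mono (hAB : A ⊆ B) (hB : μ B ≠ ⊤) : volRadius μ A ≤ volRadius μ B :=
  Real.rpow_le_rpow measureReal_nonneg (measureReal_mono hAB hB) (by positivity)

theorem volRadius_vadd [μ.IsAddLeftInvariant] [MeasurableAdd E] (x : E) :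
    volRadius μ (x +ᵥ A) = volRadius μ A := by
  simp [volRadius, measureReal_def]

theorem volRadius_pow_finrank [FiniteDimensional ℝ E] [Nontrivial E] :
    volRadius μ A ^ Module.finrank ℝ E = μ.real A :=
  Real.rpow_inv_natCast_pow measureReal_nonneg Module.finrank_pos.ne'

variable [BorelSpace E] [μ.IsAddHaarMeasure]

theorem volRadius_le_add_left (hA : IsCompact A) (hB : IsCompact B) (hA' : A.Nonempty) :
    volRadius μ B ≤ volRadius μ (A + B) := by
  obtain ⟨a, ha⟩ := hA'
  exact (volRadius_vadd a).symm.trans_le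
    (volRadius_mono (vadd_set_subset_add ha) (hA.add hB).measure_lt_top.ne)

variable [FiniteDimensional ℝ E]

theorem volRadius_neg : volRadius μ (-A) = volRadius μ A := by
  rw [volRadius, measureReal_def, Measure.measure_neg, ← measureReal_def, volRadius]

theorem volRadius_smul [Nontrivial E] (c : ℝ) :
    volRadius μ (c • A) = |c| * volRadius μ A := by
  rw [volRadius, volRadius, measureReal_def, Measure.addHaar_smul, ENNReal.toReal_mul,
    ENNReal.toReal_ofReal (abs_nonneg _), ← measureReal_def, abs_pow,
    Real.mul_rpow (by positivity) measureReal_nonneg,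
    Real.pow_rpow_inv_natCast (abs_nonneg c) Module.finrank_pos.ne']

theorem measureReal_rpow_mul_le {p q : ℝ} (hp : 0 < p) (hq : 0 < q) (hpq : p + q = 1)
    {C : Set E} (hA : MeasurableSet A) (hB : MeasurableSet B) (hC : MeasurableSet C)
    (hC' : μ C ≠ ⊤) (hABC : p • A + q • B ⊆ C) :
    μ.real A ^ p * μ.real B ^ q ≤ μ.real C := by
  have key := (isPrekopaLeindler_of_isAddHaarMeasure μ).measure_rpow_mul_le hp hq hpq hA hB hC hABC
  simpa only [measureReal_def, ENNReal.toReal_mul, ENNReal.toReal_rpow]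
    using ENNReal.toReal_mono hC' key

theorem volRadius_rpow_mul_le {p q : ℝ} (hp : 0 < p) (hq : 0 < q) (hpq : p + q = 1)
    {C : Set E} (hA : MeasurableSet A) (hB : MeasurableSet B) (hC : MeasurableSet C)
    (hC' : μ C ≠ ⊤) (hABC : p • A + q • B ⊆ C) :
    volRadius μ A ^ p * volRadius μ B ^ q ≤ volRadius μ C := by
  have key := Real.rpow_le_rpow (by positivity)
    (measureReal_rpow_mul_le hp hq hpq hA hB hC hC' hABC)
    (inv_nonneg.2 (Nat.cast_nonneg (Module.finrank ℝ E)))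
  rwa [Real.mul_rpow (by positivity) (by positivity), ← Real.rpow_mul measureReal_nonneg,
    ← Real.rpow_mul measureReal_nonneg, mul_comm p, mul_comm q, Real.rpow_mul measureReal_nonneg,
    Real.rpow_mul measureReal_nonneg] at key

-- Dilating both bodies to the common radius `r_A + r_B` turns the multiplicative inequality
-- `r_A ^ p * r_B ^ q ≤ r_C` into the additive one.
theorem volRadius_add_le [Nontrivial E] (hA : IsCompact A) (hB : IsCompact B)
    (hA' : A.Nonempty) (hB' : B.Nonempty) :
    volRadius μ A + volRadius μ B ≤ volRadius μ (A + B) := by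
  rcases (volRadius_nonneg (μ := μ) (A := A)).eq_or_lt with a0 | a0
  · rw [← a0, zero_add]
    exact volRadius_le_add_left hA hB hA'
  rcases (volRadius_nonneg (μ := μ) (A := B)).eq_or_lt with b0 | b0
  · rw [← b0, add_zero, add_comm A]
    exact volRadius_le_add_left hB hA hB'
  set a := volRadius μ A with ha
  set b := volRadius μ B with hb
  have hp : 0 < a / (a + b) := by positivity
  have hq : 0 < b / (a + b) := by positivity
  have hpq : a / (a + b) + b / (a + b) = 1 := by field_simp
  have dilate {r : ℝ} (hr : 0 < r) : |(r / (a + b))⁻¹| * r = a + b := by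
    rw [abs_of_pos (by positivity)]
    field_simp
  have key := volRadius_rpow_mul_le (μ := μ) hp hq hpq (A := (a / (a + b))⁻¹ • A)
    (B := (b / (a + b))⁻¹ • B) (C := A + B) (hA.smul _).measurableSet (hB.smul _).measurableSet
    (hA.add hB).measurableSet (hA.add hB).measure_lt_top.ne
    (by rw [smul_inv_smul₀ hp.ne', smul_inv_smul₀ hq.ne'])
  rwa [volRadius_smul, volRadius_smul, ← ha, ← hb, dilate a0, dilate b0,
    ← Real.rpow_add (by positivity), hpq, Real.rpow_one] at key

theorem isCompact_finsetSum {ι M : Type*} [AddCommMonoid M] [TopologicalSpace M] [ContinuousAdd M]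
    {s : Finset ι} {K : ι → Set M} (hK : ∀ i ∈ s, IsCompact (K i)) :
    IsCompact (∑ i ∈ s, K i) :=
  Finset.sum_induction _ IsCompact (fun _ _ => IsCompact.add) isCompact_singleton hK

theorem nonempty_finsetSum {ι M : Type*} [AddCommMonoid M] {s : Finset ι} {K : ι → Set M}
    (hK : ∀ i ∈ s, (K i).Nonempty) : (∑ i ∈ s, K i).Nonempty :=
  Finset.sum_induction _ Set.Nonempty (fun _ _ => Set.Nonempty.add) (singleton_nonempty 0) hK

theorem sum_volRadius_le [Nontrivial E] {ι : Type*} {s : Finset ι} {K : ι → Set E}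
    (hK : ∀ i ∈ s, IsCompact (K i)) (hK' : ∀ i ∈ s, (K i).Nonempty) :
    ∑ i ∈ s, volRadius μ (K i) ≤ volRadius μ (∑ i ∈ s, K i) := by
  induction s using Finset.cons_induction with
  | empty => simpa using volRadius_nonneg
  | cons i s hi ih =>
    rw [Finset.forall_mem_cons] at hK hK'
    rw [Finset.sum_cons, Finset.sum_cons]
    exact (add_le_add_right (ih hK.2 hK'.2) _).trans (volRadius_add_le hK.1
      (isCompact_finsetSum hK.2) hK'.1 (nonempty_finsetSum hK'.2))

end BrunnMinkowski

section ConvexBody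

/-- A convex body: a compact convex set with nonempty interior. Mathlib's `ConvexBody` is only
required to be nonempty. -/
structure IsConvexBody {E : Type*} [NormedAddCommGroup E] [NormedSpace ℝ E] (A : Set E) : Prop where
  isCompact : IsCompact A
  convex : Convex ℝ A
  interior_nonempty : (interior A).Nonempty

namespace IsConvexBody

variable {E : Type*} [NormedAddCommGroup E] [NormedSpace ℝ E] {A B : Set E}

theorem nonempty (hA : IsConvexBody A) : A.Nonempty := hA.interior_nonempty.mono interior_subset

theorem add (hA : IsConvexBody A) (hB : IsConvexBody B) : IsConvexBody (A + B) where
  isCompact := hA.isCompact.add hB.isCompact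
  convex := hA.convex.add hB.convex
  interior_nonempty := (hA.interior_nonempty.add hB.interior_nonempty).mono
    (isOpen_interior.add_right.subset_interior_iff.2
      (add_subset_add interior_subset interior_subset))

theorem vadd (hA : IsConvexBody A) (v : E) : IsConvexBody (v +ᵥ A) where
  isCompact := hA.isCompact.vadd v
  convex := hA.convex.vadd v
  interior_nonempty := by
    rw [interior_vadd]
    exact hA.interior_nonempty.vadd_set

theorem smul (hA : IsConvexBody A) {c : ℝ} (hc : c ≠ 0) : IsConvexBody (c • A) where
  isCompact := hA.isCompact.smul c
  convex := hA.convex.smul c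
  interior_nonempty := by
    rw [interior_smul₀ hc]
    exact hA.interior_nonempty.smul_set

theorem preimage_sub_left (hA : IsConvexBody A) (x : E) : IsConvexBody ((x - ·) ⁻¹' A) where
  isCompact := (Homeomorph.subLeft x).isCompact_preimage.2 hA.isCompact
  convex := by
    have hpre : (x - ·) ⁻¹' A = -((fun y => x + y) ⁻¹' A) := by
      ext y
      simp [sub_eq_add_neg]
    exact hpre ▸ (hA.convex.translate_preimage_right x).neg
  interior_nonempty := by
    obtain ⟨a, ha⟩ := hA.interior_nonempty
    exact ⟨x - a, ((Homeomorph.subLeft x).preimage_interior A).subset (by simpa using ha)⟩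

end IsConvexBody

end ConvexBody

section Topology

theorem subset_interior_of_disjoint_frontier {X : Type*} [TopologicalSpace X] {T Q : Set X}
    (hT : IsPreconnected T) (hTQ : (T ∩ Q).Nonempty) (hdisj : Disjoint T (frontier Q)) :
    T ⊆ interior Q := by
  obtain ⟨x, hxT, hxQ⟩ := hTQ
  refine hT.subset_left_of_subset_union isOpen_interior isClosed_closure.isOpen_compl
    (disjoint_compl_right.mono_left interior_subset_closure) (fun y hy => ?_)
    ⟨x, hxT, ?_⟩
  · by_contra hcon
    simp only [mem_union, mem_compl_iff, not_or, not_not] at hcon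
    exact disjoint_left.1 hdisj hy ⟨hcon.2, hcon.1⟩
  · by_contra hx
    exact disjoint_left.1 hdisj hxT ⟨subset_closure hxQ, hx⟩

variable {E : Type*} [NormedAddCommGroup E] [NormedSpace ℝ E]

theorem exists_add_smul_mem_frontier {K : Set E} (hK : Bornology.IsBounded K) {x v : E}
    (hx : x ∈ K) (hv : v ≠ 0) : ∃ t : ℝ, 0 ≤ t ∧ x + t • v ∈ frontier K := by
  by_contra! hcon
  have ray_subset : (fun t : ℝ => x + t • v) '' Ici 0 ⊆ K := by
    refine (subset_interior_of_disjoint_frontier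
      ((convex_Ici 0).isPreconnected.image _ (by fun_prop)) ⟨x, ⟨0, by simp⟩, hx⟩ ?_).trans
      interior_subset
    rw [disjoint_left]
    rintro _ ⟨t, ht, rfl⟩
    exact hcon t ht
  obtain ⟨R, hR⟩ := hK.exists_norm_le
  have hxR := hR x hx
  have hv' := norm_pos_iff.2 hv
  have ht : 0 ≤ (2 * R + 1) / ‖v‖ := by
    have := (norm_nonneg x).trans hxR
    positivity
  have hfar := hR _ (ray_subset ⟨(2 * R + 1) / ‖v‖, ht, rfl⟩)
  have : ‖((2 * R + 1) / ‖v‖) • v‖ = 2 * R + 1 := by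
    rw [norm_smul, Real.norm_of_nonneg ht, div_mul_cancel₀ _ hv'.ne']
  have := norm_sub_le (x + ((2 * R + 1) / ‖v‖) • v) x
  rw [add_sub_cancel_left] at this
  linarith

-- A point of `K` lies between the two points where a line through it leaves `K`.
theorem subset_of_frontier_subset [Nontrivial E] {K U : Set E} (hK : Bornology.IsBounded K)
    (hU : Convex ℝ U) (h : frontier K ⊆ U) : K ⊆ U := by
  intro x hx
  obtain ⟨v, hv⟩ := exists_ne (0 : E)
  obtain ⟨t, ht, hxt⟩ := exists_add_smul_mem_frontier hK hx hv
  obtain ⟨s, hs, hxs⟩ := exists_add_smul_mem_frontier hK hx (neg_ne_zero.2 hv)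
  rcases (add_nonneg ht hs).eq_or_lt with hts | hts
  · obtain rfl : t = 0 := by linarith
    exact h (by simpa using hxt)
  · have hxU := hU (h hxt) (h hxs) (a := s / (t + s)) (b := t / (t + s)) (by positivity)
      (by positivity) (by field_simp; ring)
    convert hxU using 1
    match_scalars <;> field_simp <;> ring

theorem isPreconnected_frontier (hE : 1 < Module.rank ℝ E) {K : Set E} (hK : IsConvexBody K) :
    IsPreconnected (frontier K) := by
  obtain ⟨e, -, -, he⟩ := exists_homeomorph_image_interior_closure_frontier_eq_unitBall
    hK.convex hK.interior_nonempty hK.isCompact.isBounded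
  exact e.isPreconnected_image.1 (he ▸ isPreconnected_sphere hE 0 1)

theorem subset_interior_or_subset_of_frontier_subset (hE : 1 < Module.rank ℝ E) {Q T H : Set E}
    (hQ : IsConvexBody Q) (hT : IsClosed T) (hT' : IsPreconnected T) (hH : IsOpen H)
    (hH' : Convex ℝ H) (hHT : H ⊆ T) (hTQ : (T ∩ Q).Nonempty) (hfr : frontier Q ⊆ Tᶜ ∪ H) :
    T ⊆ interior Q ∨ Q ⊆ H := by
  have : Nontrivial E := rank_pos_iff_nontrivial.1 (zero_lt_one.trans hE)
  rcases (isPreconnected_frontier hE hQ).subset_or_subset hT.isOpen_compl hH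
    (disjoint_compl_left.mono_right hHT) hfr with h | h
  · exact .inl (subset_interior_of_disjoint_frontier hT' hTQ (subset_compl_iff_disjoint_left.1 h))
  · exact .inr (subset_of_frontier_subset hQ.isCompact.isBounded hH' h)

end Topology

section MinkowskiDifference

/-- The Minkowski difference `A ⊖ B`: the set of translation vectors that carry `B` into `A`. The
points of a sum of bodies that the sum of the frontiers misses lie in such a difference. -/
def minkowskiDiff {E : Type*} [Add E] (A B : Set E) : Set E := {x | ∀ b ∈ B, x + b ∈ A}

variable {E : Type*} {A B C : Set E}

theorem minkowskiDiff_mono_left [Add E] (h : A ⊆ B) : minkowskiDiff A C ⊆ minkowskiDiff B C :=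
  fun _ hx c hc => h (hx c hc)

theorem minkowskiDiff_add_subset [Add E] : minkowskiDiff A B + B ⊆ A := by
  rintro _ ⟨x, hx, b, hb, rfl⟩
  exact hx b hb

theorem minkowskiDiff_eq_iInter [Add E] : minkowskiDiff A B = ⋂ b ∈ B, (· + b) ⁻¹' A := by
  ext x
  simp [minkowskiDiff]

theorem minkowskiDiff_minkowskiDiff [AddSemigroup E] :
    minkowskiDiff (minkowskiDiff A B) C = minkowskiDiff A (C + B) := by
  ext x
  simp only [minkowskiDiff, mem_ofPred_eq, add_assoc, ← image2_add, forall_mem_image2]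

variable [AddCommGroup E]

theorem mem_minkowskiDiff_neg {x : E} : x ∈ minkowskiDiff A (-B) ↔ ∀ b ∈ B, x - b ∈ A := by
  simp only [minkowskiDiff, mem_ofPred_eq, ← image_neg_eq_neg, forall_mem_image, sub_eq_add_neg]

theorem minkowskiDiff_neg_subset_add (hB : B.Nonempty) : minkowskiDiff A (-B) ⊆ A + B := by
  obtain ⟨b, hb⟩ := hB
  exact fun x hx => ⟨x - b, mem_minkowskiDiff_neg.1 hx b hb, b, hb, sub_add_cancel x b⟩

theorem convex_minkowskiDiff [Module ℝ E] (hA : Convex ℝ A) : Convex ℝ (minkowskiDiff A B) := by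
  rw [minkowskiDiff_eq_iInter]
  exact convex_iInter₂ fun b _ => hA.translate_preimage_left b

variable [TopologicalSpace E] [IsTopologicalAddGroup E]

theorem isOpen_minkowskiDiff (hA : IsOpen A) (hB : IsCompact B) : IsOpen (minkowskiDiff A B) := by
  have : minkowskiDiff A B = (Aᶜ + -B)ᶜ := by
    ext x
    simp only [minkowskiDiff, mem_ofPred_eq, mem_compl_iff, Set.mem_add, Set.mem_neg,
      not_exists, not_and]
    refine ⟨fun hx a ha b hb hab => ha ?_, fun hx b hb => by_contra fun hcon => ?_⟩
    · simpa [← hab] using hx (-b) hb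
    · exact hx _ hcon (-b) (by simpa) (by abel)
  rw [this]
  exact (hA.isClosed_compl.add_right_of_isCompact hB.neg).isOpen_compl

theorem isCompact_minkowskiDiff (hA : IsCompact A) (hA' : IsClosed A) (hB : B.Nonempty) :
    IsCompact (minkowskiDiff A B) := by
  obtain ⟨b, hb⟩ := hB
  have hclosed : IsClosed (minkowskiDiff A B) := by
    rw [minkowskiDiff_eq_iInter]
    exact isClosed_biInter fun b _ => hA'.preimage (continuous_add_const b)
  exact ((Homeomorph.addRight b).isCompact_preimage.2 hA).of_isClosed_subset hclosed
    fun x hx => hx b hb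

end MinkowskiDifference

section SumOfFrontiers

variable {E : Type*} [NormedAddCommGroup E] [NormedSpace ℝ E]

theorem mem_minkowskiDiff_of_frontier (hE : 1 < Module.rank ℝ E) {K T H : Set E}
    (hK : IsConvexBody K) (hT : IsClosed T) (hT' : IsPreconnected T) (hH : IsOpen H)
    (hH' : Convex ℝ H) (hHT : H ⊆ T) {x : E} (hx : x ∈ K + T)
    (hxT : ¬ T ⊆ (x - ·) ⁻¹' interior K) (hfr : ∀ k ∈ frontier K, x - k ∈ T → x - k ∈ H) :
    x ∈ minkowskiDiff H (-K) := by
  have hTQ : (T ∩ (x - ·) ⁻¹' K).Nonempty := by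
    obtain ⟨k, hk, t, ht, rfl⟩ := hx
    exact ⟨t, ht, by simpa using hk⟩
  have hcover : frontier ((x - ·) ⁻¹' K) ⊆ Tᶜ ∪ H := by
    intro y hy
    have hy' : x - y ∈ frontier K :=
      ((Homeomorph.subLeft x).preimage_frontier K).superset hy
    have := hfr _ hy'
    rw [sub_sub_cancel] at this
    exact or_iff_not_imp_left.2 fun hyT => this (not_not.1 hyT)
  rcases subset_interior_or_subset_of_frontier_subset hE (hK.preimage_sub_left x) hT hT' hH
    hH' hHT hTQ hcover with h | h
  · exact absurd (h.trans ((Homeomorph.subLeft x).preimage_interior K).superset) hxT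
  · exact mem_minkowskiDiff_neg.2 fun k' hk' => h (by simpa using hk')

-- The bodies are added to the dominant body `L` one at a time. In each step the preceding lemma is
-- applied with `T` the sum so far and `H` the difference that contains the points missed so far.
theorem mem_minkowskiDiff_of_notMem_sum_frontier (hE : 1 < Module.rank ℝ E) {ι : Type*}
    {K : ι → Set E} {L : Set E} {s : Finset ι} (hK : ∀ i ∈ s, IsConvexBody (K i))
    (hL : IsConvexBody L) (hLK : ∀ i ∈ s, ∀ v, ¬ L ⊆ (v - ·) ⁻¹' interior (K i)) :
    ∀ x ∈ L + ∑ i ∈ s, K i, x ∉ frontier L + ∑ i ∈ s, frontier (K i) →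
      x ∈ minkowskiDiff (interior L) (-∑ i ∈ s, K i) := by
  induction s using Finset.cons_induction with
  | empty =>
    intro x hx hxf
    simp only [Finset.sum_empty, add_zero] at hx hxf
    rw [mem_minkowskiDiff_neg]
    simpa using fun hcon => hxf ⟨subset_closure hx, hcon⟩
  | cons i s hi ih =>
    intro x hx hxf
    rw [Finset.forall_mem_cons] at hK hLK
    rw [Finset.sum_cons, add_left_comm] at hx hxf
    have hB : IsCompact (∑ j ∈ s, K j) := isCompact_finsetSum fun j hj => (hK.2 j hj).isCompact
    have hB' : (∑ j ∈ s, K j).Nonempty := nonempty_finsetSum fun j hj => (hK.2 j hj).nonempty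
    have hT : IsCompact (L + ∑ j ∈ s, K j) := hL.isCompact.add hB
    have hT' : Convex ℝ (L + ∑ j ∈ s, K j) :=
      hL.convex.add (convex_sum _ fun j hj => (hK.2 j hj).convex)
    rw [Finset.sum_cons, neg_add, ← minkowskiDiff_minkowskiDiff]
    refine mem_minkowskiDiff_of_frontier hE hK.1 hT.isClosed hT'.isPreconnected
      (isOpen_minkowskiDiff isOpen_interior hB.neg) (convex_minkowskiDiff hL.convex.interior)
      ((minkowskiDiff_mono_left interior_subset).trans (minkowskiDiff_neg_subset_add hB')) hx
      (fun hsub => ?_) fun k hk hxk => ih hK.2 hLK.2 _ hxk fun hmem => hxf ⟨k, hk, _, hmem, by simp⟩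
    obtain ⟨b, hb⟩ := hB'
    refine hLK.1 (x - b) fun l hl => ?_
    simpa only [mem_preimage, sub_sub, add_comm b] using hsub (add_mem_add hl hb)

end SumOfFrontiers

section CDF

theorem one_sub_cdf (ρ : Measure ℝ) [IsProbabilityMeasure ρ] (x : ℝ) :
    1 - cdf ρ x = ρ.real (Ioi x) := by
  rw [cdf_eq_real, ← probReal_compl_eq_one_sub measurableSet_Iic, compl_Iic]

theorem continuous_cdf (ρ : Measure ℝ) [IsProbabilityMeasure ρ] [NullSingletonClass ρ] :
    Continuous (cdf ρ) := by
  refine continuous_iff_continuousAt.2 fun x => ?_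
  have jump : ENNReal.ofReal (cdf ρ x - Function.leftLim (cdf ρ) x) = 0 := by
    rw [← StieltjesFunction.measure_singleton, measure_cdf, measure_singleton]
  have le_leftLim : cdf ρ x ≤ Function.leftLim (cdf ρ) x := by
    simpa using jump
  rw [(monotone_cdf ρ).continuousAt_iff_leftLim_eq_rightLim, StieltjesFunction.rightLim_eq]
  exact ((monotone_cdf ρ).leftLim_le le_rfl).antisymm le_leftLim

theorem exists_cdf_eq (ρ : Measure ℝ) [IsProbabilityMeasure ρ] [NullSingletonClass ρ] {t : ℝ}
    (ht : t ∈ Ioo 0 1) : ∃ x, cdf ρ x = t :=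
  mem_range_of_exists_le_of_exists_ge (continuous_cdf ρ)
    ((tendsto_cdf_atBot ρ).eventually_le_const ht.1).exists
    ((tendsto_cdf_atTop ρ).eventually_const_le ht.2).exists

theorem cdf_eq_of_forall_cdf_eq {ρ σ : Measure ℝ} [IsProbabilityMeasure ρ]
    [IsProbabilityMeasure σ] [NullSingletonClass ρ]
    (h : ∀ t ∈ Ioo (0 : ℝ) 1, ∀ x, cdf ρ x = t → cdf σ x = t) : cdf ρ = cdf σ := by
  ext x
  by_contra hne
  obtain ⟨t, hlt, hgt⟩ := exists_between (min_lt_max.2 hne)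
  have ht : t ∈ Ioo (0 : ℝ) 1 := ⟨(le_min (cdf_nonneg ρ x) (cdf_nonneg σ x)).trans_lt hlt,
    hgt.trans_le (max_le (cdf_le_one ρ x) (cdf_le_one σ x))⟩
  obtain ⟨y, hρy⟩ := exists_cdf_eq ρ ht
  have hσy := h t ht y hρy
  rcases le_total y x with hyx | hxy
  · exact hlt.not_ge (le_min (hρy ▸ monotone_cdf ρ hyx) (hσy ▸ monotone_cdf σ hyx))
  · exact hgt.not_ge (max_le (hρy ▸ monotone_cdf ρ hxy) (hσy ▸ monotone_cdf σ hxy))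

theorem add_mul_log_le_rpow_mul_rpow {a b : ℝ} (ha : 0 < a) (hb : 0 < b) (q : ℝ) :
    a + a * (q * Real.log (b / a)) ≤ a ^ (1 - q) * b ^ q := by
  calc a + a * (q * Real.log (b / a)) = a * (Real.log (b / a) * q + 1) := by ring
    _ ≤ a * (b / a) ^ q := by
      rw [Real.rpow_def_of_pos (by positivity)]
      gcongr
      exact Real.add_one_le_exp _
    _ = a ^ (1 - q) * b ^ q := by
      rw [Real.div_rpow hb.le ha.le, Real.rpow_sub ha, Real.rpow_one]
      ring

theorem exists_sub_le_mul_cdf_sub {τ : Measure ℝ} [IsProbabilityMeasure τ]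
    (hτ : ∀ p q : ℝ, 0 < p → 0 < q → p + q = 1 →
      ∀ x y, cdf τ x ^ p * cdf τ y ^ q ≤ cdf τ (p * x + q * y))
    {L U : ℝ} (hL : 0 < L) (hU : U < 1) (hLU : L ≤ U) :
    ∃ C, 0 ≤ C ∧ ∀ x y, L ≤ cdf τ x → cdf τ y ≤ U → x ≤ y → y - x ≤ C * (cdf τ y - cdf τ x) := by
  obtain ⟨lo, hlo⟩ := ((tendsto_cdf_atBot τ).eventually_lt_const hL).exists
  obtain ⟨hi, hhi⟩ := ((tendsto_cdf_atTop τ).eventually_const_lt hU).exists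
  have hU0 : 0 < U := hL.trans_le hLU
  have hlohi : lo < hi := (monotone_cdf τ).reflect_lt (hlo.trans_le (hLU.trans hhi.le))
  have hlog : 0 < Real.log (cdf τ hi / U) := Real.log_pos ((one_lt_div hU0).2 hhi)
  refine ⟨(hi - lo) / (L * Real.log (cdf τ hi / U)),
    div_nonneg (sub_pos.2 hlohi).le (by positivity), fun x y hx hy hxy => ?_⟩
  have hlox : lo < x := (monotone_cdf τ).reflect_lt (hlo.trans_le hx)
  have hyhi : y < hi := (monotone_cdf τ).reflect_lt (hy.trans_lt hhi)
  rcases hxy.eq_or_lt with rfl | hxy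
  · simp
  have hFx : 0 < cdf τ x := hL.trans_le hx
  have hFhi : 0 < cdf τ hi := hU0.trans hhi
  set q := (y - x) / (hi - x) with hq
  have hxhi : 0 < hi - x := by linarith
  have hq0 : 0 < q := div_pos (sub_pos.2 hxy) hxhi
  have hq1 : 0 < 1 - q := by rw [hq, sub_pos, div_lt_one hxhi]; linarith
  have hy_eq : (1 - q) * x + q * hi = y := by rw [hq]; field_simp; ring
  have growth := calc
    cdf τ x + L * (q * Real.log (cdf τ hi / U))
         ≤ cdf τ x + cdf τ x * (q * Real.log (cdf τ hi / cdf τ x)) := by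
           gcongr
           exact (monotone_cdf τ hxy.le).trans hy
    _ ≤ cdf τ x ^ (1 - q) * cdf τ hi ^ q := add_mul_log_le_rpow_mul_rpow hFx hFhi q
    _ ≤ cdf τ y := hy_eq ▸ hτ _ _ hq1 hq0 (sub_add_cancel 1 q) x hi
  calc y - x = q * (hi - x) := by rw [hq, div_mul_cancel₀ _ hxhi.ne']
    _ ≤ q * (hi - lo) := by gcongr
    _ = (hi - lo) / (L * Real.log (cdf τ hi / U)) * (L * (q * Real.log (cdf τ hi / U))) := by
          field_simp
    _ ≤ (hi - lo) / (L * Real.log (cdf τ hi / U)) * (cdf τ y - cdf τ x) := by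
          have := (sub_pos.2 hlohi).le
          gcongr
          linarith

theorem half_add_sub_sqrt_mul_sqrt_le {s t : ℝ} (hs : 0 ≤ s) (ht : 0 < t) :
    (s + t) / 2 - √s * √t ≤ (s - t) ^ 2 / (2 * t) := by
  have hs' := Real.sq_sqrt hs
  have ht' := Real.sq_sqrt ht.le
  have hfac : (s - t) ^ 2 = (√s - √t) ^ 2 * (√s + √t) ^ 2 := by
    rw [← mul_pow, ← hs', ← ht', Real.sqrt_sq (Real.sqrt_nonneg _),
      Real.sqrt_sq (Real.sqrt_nonneg _)]
    ring
  have hle : t ≤ (√s + √t) ^ 2 := by nlinarith [Real.sqrt_nonneg s, Real.sqrt_nonneg t]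
  rw [le_div_iff₀ (by positivity), hfac]
  nlinarith [mul_le_mul_of_nonneg_left hle (sq_nonneg (√s - √t))]

theorem one_sub_sqrt_mul_sqrt_sub_sqrt_mul_sqrt_le {s t : ℝ} (hs0 : 0 ≤ s) (hs1 : s ≤ 1)
    (ht : t ∈ Ioo 0 1) :
    1 - √(1 - s) * √(1 - t) - √s * √t ≤ (1 / (2 * t) + 1 / (2 * (1 - t))) * (s - t) ^ 2 := by
  have h₁ := half_add_sub_sqrt_mul_sqrt_le hs0 ht.1
  have h₂ := half_add_sub_sqrt_mul_sqrt_le (sub_nonneg.2 hs1) (sub_pos.2 ht.2)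
  rw [show 1 - s - (1 - t) = -(s - t) by ring, neg_sq] at h₂
  linear_combination h₁ + h₂

variable {ρ σ τ : Measure ℝ} [IsProbabilityMeasure τ]

-- The `τ`-distribution function takes values in an interval of length `O((s - t) ^ 2)` at both
-- `(x + y') / 2` and `(x' + y) / 2`.
theorem exists_abs_quantile_sub_le
    (hτ : ∀ p q : ℝ, 0 < p → 0 < q → p + q = 1 →
      ∀ x y, cdf τ x ^ p * cdf τ y ^ q ≤ cdf τ (p * x + q * y))
    (hlow : ∀ x y, √(cdf ρ x) * √(cdf σ y) ≤ cdf τ ((x + y) / 2))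
    (hupp : ∀ x y, √(1 - cdf ρ x) * √(1 - cdf σ y) ≤ 1 - cdf τ ((x + y) / 2))
    {t : ℝ} (ht : t ∈ Ioo 0 1) :
    ∃ C, ∀ᶠ s in 𝓝 t, ∀ x y x' y', cdf ρ x = s → cdf σ y = s → cdf ρ x' = t → cdf σ y' = t →
      |(x - y) - (x' - y')| ≤ C * (s - t) ^ 2 := by
  obtain ⟨ht0, ht1⟩ := ht
  obtain ⟨C, hC, hCle⟩ := exists_sub_le_mul_cdf_sub hτ (L := t / 2) (U := (1 + t) / 2)
    (by linarith) (by linarith) (by linarith)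
  refine ⟨2 * C * (1 / (2 * t) + 1 / (2 * (1 - t))), ?_⟩
  filter_upwards [Ioo_mem_nhds (show t / 2 < t by linarith) (show t < (1 + t) / 2 by linarith)]
    with s hs x y x' y' hx hy hx' hy'
  obtain ⟨hs0, hs1⟩ := hs
  have sqrt_low {a b c : ℝ} (hc : 0 ≤ c) (ha : c ≤ a) (hb : c ≤ b) : c ≤ √a * √b := by
    rw [← Real.mul_self_sqrt hc]
    gcongr
  have low := sqrt_low (c := t / 2) (by linarith) hs0.le (by linarith : t / 2 ≤ t)
  have upp := sqrt_low (c := (1 - t) / 2) (a := 1 - s) (b := 1 - t) (by linarith) (by linarith)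
    (by linarith)
  have gap := one_sub_sqrt_mul_sqrt_sub_sqrt_mul_sqrt_le (s := s) (by linarith) (by linarith)
    ⟨ht0, ht1⟩
  have low₁ := hlow x y'
  have upp₁ := hupp x y'
  have low₂ := hlow x' y
  have upp₂ := hupp x' y
  rw [hx, hy'] at low₁ upp₁
  rw [hx', hy, mul_comm] at low₂ upp₂
  have dist_le {u v : ℝ} (huv : u ≤ v) (hu : √s * √t ≤ cdf τ u)
      (hv : √(1 - s) * √(1 - t) ≤ 1 - cdf τ v) :
      v - u ≤ C * ((1 / (2 * t) + 1 / (2 * (1 - t))) * (s - t) ^ 2) :=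
    (hCle u v (low.trans hu) (by linarith) huv).trans (by gcongr; linarith)
  rcases le_total ((x + y') / 2) ((x' + y) / 2) with h | h
  · rw [abs_of_nonpos (by linarith)]
    linarith [dist_le h low₁ upp₂]
  · rw [abs_of_nonneg (by linarith)]
    linarith [dist_le h low₂ upp₁]

theorem exists_map_add_eq_of_sqrt_cdf_mul_le [IsProbabilityMeasure ρ] [NullSingletonClass ρ]
    [IsProbabilityMeasure σ] [NullSingletonClass σ]
    (hτ : ∀ p q : ℝ, 0 < p → 0 < q → p + q = 1 →
      ∀ x y, cdf τ x ^ p * cdf τ y ^ q ≤ cdf τ (p * x + q * y))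
    (hlow : ∀ x y, √(cdf ρ x) * √(cdf σ y) ≤ cdf τ ((x + y) / 2))
    (hupp : ∀ x y, √(1 - cdf ρ x) * √(1 - cdf σ y) ≤ 1 - cdf τ ((x + y) / 2)) :
    ∃ c, σ.map (· + c) = ρ := by
  choose! x hx using fun t => exists_cdf_eq ρ (t := t)
  choose! y hy using fun t => exists_cdf_eq σ (t := t)
  have hderiv {t : ℝ} (ht : t ∈ Ioo (0 : ℝ) 1) : HasDerivAt (fun s => x s - y s) 0 t := by
    obtain ⟨C, hC⟩ := exists_abs_quantile_sub_le hτ hlow hupp ht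
    rw [hasDerivAt_iff_isLittleO]
    refine (Asymptotics.IsBigO.of_bound C ?_).trans_isLittleO
      (Asymptotics.isLittleO_pow_sub_sub t one_lt_two)
    filter_upwards [hC, Ioo_mem_nhds ht.1 ht.2] with s hs hs01
    simpa using hs _ _ _ _ (hx s hs01) (hy s hs01) (hx t ht) (hy t ht)
  obtain ⟨c, hc⟩ := isOpen_Ioo.exists_is_const_of_deriv_eq_zero isPreconnected_Ioo
    (fun t ht => (hderiv ht).differentiableAt.differentiableWithinAt)
    (fun t ht => (hderiv ht).deriv)
  have quantile_sub {t a b : ℝ} (ht : t ∈ Ioo (0 : ℝ) 1) (ha : cdf ρ a = t) (hb : cdf σ b = t) :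
      a - b = c := by
    obtain ⟨C, hC⟩ := exists_abs_quantile_sub_le hτ hlow hupp ht
    have := hC.self_of_nhds a b _ _ ha hb (hx t ht) (hy t ht)
    rw [sub_self, zero_pow two_ne_zero, mul_zero, abs_nonpos_iff, sub_eq_zero] at this
    exact this.trans (hc _ ht)
  have : IsProbabilityMeasure (σ.map (· + c)) := Measure.isProbabilityMeasure_map (by fun_prop)
  have cdf_map (a : ℝ) : cdf (σ.map (· + c)) a = cdf σ (a - c) := by
    rw [cdf_eq_real, cdf_eq_real, map_measureReal_apply (by fun_prop) measurableSet_Iic,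
      preimage_add_const_Iic]
  refine ⟨c, (Measure.eq_of_cdf _ _ (cdf_eq_of_forall_cdf_eq fun t ht a ha => ?_)).symm⟩
  obtain ⟨b, hb⟩ := exists_cdf_eq σ ht
  rw [cdf_map, ← quantile_sub ht ha hb, sub_sub_cancel, hb]

end CDF

section BrunnMinkowskiEquality

theorem map_add_left_cond {G : Type*} [AddGroup G] [MeasurableSpace G] [MeasurableAdd G]
    {μ : Measure G} [μ.IsAddLeftInvariant] {A : Set G} (hA : MeasurableSet A)
    (v : G) : μ[|A].map (v + ·) = μ[|v +ᵥ A] := by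
  ext s hs
  have himage : v +ᵥ (A ∩ (v + ·) ⁻¹' s) = (v +ᵥ A) ∩ s := image_inter_preimage _ _ _
  rw [Measure.map_apply (by fun_prop) hs, cond_apply hA, cond_apply (hA.const_vadd v),
    measure_vadd, ← himage, measure_vadd]

variable {E : Type*} [NormedAddCommGroup E] [NormedSpace ℝ E] [MeasurableSpace E]
  {μ : Measure E} {A B C : Set E} {u : StrongDual ℝ E}

theorem IsConvexBody.measure_ne_top [IsFiniteMeasureOnCompacts μ] (hA : IsConvexBody A) :
    μ A ≠ ⊤ := hA.isCompact.measure_lt_top.ne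

theorem IsConvexBody.measure_ne_zero [μ.IsOpenPosMeasure] (hA : IsConvexBody A) : μ A ≠ 0 :=
  (Measure.measure_pos_of_nonempty_interior μ hA.interior_nonempty).ne'

theorem IsConvexBody.isProbabilityMeasure_cond [IsFiniteMeasureOnCompacts μ] [μ.IsOpenPosMeasure]
    (hA : IsConvexBody A) : IsProbabilityMeasure μ[|A] :=
  cond_isProbabilityMeasure_of_finite hA.measure_ne_zero hA.measure_ne_top

variable [BorelSpace E]

theorem IsConvexBody.measurableSet (hA : IsConvexBody A) : MeasurableSet A :=
  hA.isCompact.measurableSet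

theorem IsConvexBody.subset_of_cond_eq [IsFiniteMeasureOnCompacts μ] [μ.IsOpenPosMeasure]
    (hA : IsConvexBody A) (hB : IsConvexBody B) (h : μ[|A] = μ[|B]) : A ⊆ B := by
  have hnull : μ (interior A \ B) = 0 := by
    have hB' : μ[|A] Bᶜ = 0 := by
      rw [h, cond_apply hB.measurableSet, inter_compl_self, measure_empty, mul_zero]
    rw [cond_apply hA.measurableSet, mul_eq_zero, ENNReal.inv_eq_zero,
      or_iff_right hA.measure_ne_top] at hB'
    exact measure_mono_null (inter_subset_inter_left _ interior_subset) hB'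
  have hempty := (isOpen_interior.sdiff hB.isCompact.isClosed).measure_eq_zero_iff μ |>.1 hnull
  rw [sdiff_eq_empty] at hempty
  calc A ⊆ closure A := subset_closure
    _ = closure (interior A) :=
      (hA.convex.closure_interior_eq_closure_of_nonempty_interior hA.interior_nonempty).symm
    _ ⊆ B := hB.isCompact.isClosed.closure_subset_iff.2 hempty

/-- The distribution of the linear functional `u` on the set `A` with normalised measure; the
marginals for all `u` determine a convex body. -/
noncomputable def marginal (μ : Measure E) (A : Set E) (u : StrongDual ℝ E) : Measure ℝ :=
  μ[|A].map u

theorem isProbabilityMeasure_marginal [IsFiniteMeasureOnCompacts μ] [μ.IsOpenPosMeasure]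
    (hA : IsConvexBody A) : IsProbabilityMeasure (marginal μ A u) :=
  have := hA.isProbabilityMeasure_cond (μ := μ)
  Measure.isProbabilityMeasure_map (by fun_prop)

theorem marginal_real_apply (hA : MeasurableSet A) {S : Set ℝ} (hS : MeasurableSet S) :
    (marginal μ A u).real S = μ.real (A ∩ u ⁻¹' S) / μ.real A := by
  rw [marginal, map_measureReal_apply (by fun_prop) hS, measureReal_def, cond_apply hA,
    ENNReal.toReal_mul, ENNReal.toReal_inv, ← div_eq_inv_mul, measureReal_def, measureReal_def]

/-- The centroid of a set with respect to its normalised measure, which locates the translation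
between two bodies with equal marginals up to translation. -/
noncomputable def barycenter (μ : Measure E) (A : Set E) : E := ∫ x, x ∂μ[|A]

theorem integrable_id_cond [IsFiniteMeasureOnCompacts μ] [μ.IsOpenPosMeasure]
    (hA : IsConvexBody A) : Integrable (fun x => x) μ[|A] :=
  (continuousOn_id.integrableOn_compact hA.isCompact).smul_measure
    (ENNReal.inv_ne_top.2 hA.measure_ne_zero)

theorem integral_marginal [CompleteSpace E] [IsFiniteMeasureOnCompacts μ] [μ.IsOpenPosMeasure]
    (hA : IsConvexBody A) :
    ∫ t, t ∂marginal μ A u = u (barycenter μ A) := by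
  rw [marginal, integral_map (by fun_prop) (by fun_prop), barycenter]
  exact u.integral_comp_comm (integrable_id_cond hA)

theorem integrable_id_marginal [IsFiniteMeasureOnCompacts μ] [μ.IsOpenPosMeasure]
    (hA : IsConvexBody A) : Integrable (fun t => t) (marginal μ A u) :=
  (integrable_map_measure (by fun_prop) (by fun_prop)).2 (u.integrable_comp (integrable_id_cond hA))

theorem marginal_vadd [μ.IsAddLeftInvariant] (hA : MeasurableSet A) (v : E) :
    marginal μ (v +ᵥ A) u = (marginal μ A u).map (· + u v) := by
  rw [marginal, marginal, ← map_add_left_cond hA v, Measure.map_map (by fun_prop) (by fun_prop),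
    Measure.map_map (by fun_prop) (by fun_prop)]
  congr 1
  ext x
  simp [add_comm]

variable [FiniteDimensional ℝ E] [μ.IsAddHaarMeasure]

theorem nullSingletonClass_marginal (hu : u ≠ 0) : NullSingletonClass (marginal μ A u) where
  measure_singleton t := by
    obtain ⟨c, -, hc⟩ := LinearMap.exists_map_addHaar_eq_smul_addHaar (u : E →ₗ[ℝ] ℝ) μ volume
      (LinearMap.surjective (by exact_mod_cast hu))
    have hlevel : μ (u ⁻¹' {t}) = 0 := by
      have := congrArg (· {t}) hc
      simpa [Measure.map_apply u.measurable] using this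
    rw [marginal, Measure.map_apply u.measurable (measurableSet_singleton t)]
    exact cond_absolutelyContinuous hlevel

theorem marginal_rpow_mul_le (hA : IsConvexBody A) (hB : IsConvexBody B) (hC : IsConvexBody C)
    {p q : ℝ} (hp : 0 < p) (hq : 0 < q) (hpq : p + q = 1) (hABC : p • A + q • B ⊆ C)
    (hAB : μ.real A = μ.real B) (hCA : μ.real C ≤ μ.real A) {S T R : Set ℝ}
    (hS : MeasurableSet S) (hT : MeasurableSet T) (hR : MeasurableSet R)
    (hSTR : ∀ s ∈ S, ∀ t ∈ T, p * s + q * t ∈ R) :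
    (marginal μ A u).real S ^ p * (marginal μ B u).real T ^ q ≤ (marginal μ C u).real R := by
  have hC0 : 0 < μ.real C := ENNReal.toReal_pos hC.measure_ne_zero hC.measure_ne_top
  have hA0 : 0 < μ.real A := hC0.trans_le hCA
  have key : μ.real (A ∩ u ⁻¹' S) ^ p * μ.real (B ∩ u ⁻¹' T) ^ q ≤ μ.real (C ∩ u ⁻¹' R) := by
    refine measureReal_rpow_mul_le hp hq hpq (hA.measurableSet.inter (u.measurable hS))
      (hB.measurableSet.inter (u.measurable hT)) (hC.measurableSet.inter (u.measurable hR))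
      (measure_ne_top_of_subset inter_subset_left hC.measure_ne_top) ?_
    rintro _ ⟨_, ⟨a, ha, rfl⟩, _, ⟨b, hb, rfl⟩, rfl⟩
    exact ⟨hABC ⟨_, ⟨a, ha.1, rfl⟩, _, ⟨b, hb.1, rfl⟩, rfl⟩, by simpa using hSTR _ ha.2 _ hb.2⟩
  rw [marginal_real_apply hA.measurableSet hS, marginal_real_apply hB.measurableSet hT,
    marginal_real_apply hC.measurableSet hR, ← hAB, Real.div_rpow (by positivity) hA0.le,
    Real.div_rpow (by positivity) hA0.le, div_mul_div_comm, ← Real.rpow_add hA0, hpq,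
    Real.rpow_one]
  gcongr

theorem exists_map_add_marginal_eq (hA : IsConvexBody A) (hB : IsConvexBody B)
    (hC : IsConvexBody C) (hABC : (2⁻¹ : ℝ) • A + (2⁻¹ : ℝ) • B ⊆ C)
    (hAB : μ.real A = μ.real B) (hCA : μ.real C ≤ μ.real A) (hu : u ≠ 0) :
    ∃ c, (marginal μ B u).map (· + c) = marginal μ A u := by
  have := isProbabilityMeasure_marginal hA (μ := μ) (u := u)
  have := isProbabilityMeasure_marginal hB (μ := μ) (u := u)
  have := isProbabilityMeasure_marginal hC (μ := μ) (u := u)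
  have := nullSingletonClass_marginal (μ := μ) (A := A) hu
  have := nullSingletonClass_marginal (μ := μ) (A := B) hu
  have midpoint_le {S T R : Set ℝ} (hS : MeasurableSet S) (hT : MeasurableSet T)
      (hR : MeasurableSet R) (hSTR : ∀ s ∈ S, ∀ t ∈ T, 2⁻¹ * s + 2⁻¹ * t ∈ R) :
      √((marginal μ A u).real S) * √((marginal μ B u).real T) ≤ (marginal μ C u).real R := by
    simpa only [Real.sqrt_eq_rpow, one_div] using marginal_rpow_mul_le hA hB hC
      (by norm_num : (0 : ℝ) < 2⁻¹) (by norm_num : (0 : ℝ) < 2⁻¹) (by norm_num) hABC hAB hCA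
      hS hT hR hSTR
  refine exists_map_add_eq_of_sqrt_cdf_mul_le (τ := marginal μ C u) (fun p q hp hq hpq x y => ?_)
    (fun x y => ?_) (fun x y => ?_)
  · simp only [cdf_eq_real]
    refine marginal_rpow_mul_le hC hC hC hp hq hpq (hC.convex.set_combo_subset hp.le hq.le hpq)
      rfl le_rfl measurableSet_Iic measurableSet_Iic measurableSet_Iic fun s hs t ht => ?_
    rw [mem_Iic] at *
    gcongr
  · simp only [cdf_eq_real]
    refine midpoint_le measurableSet_Iic measurableSet_Iic measurableSet_Iic fun s hs t ht => ?_
    rw [mem_Iic] at *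
    linarith
  · simp only [one_sub_cdf]
    refine midpoint_le measurableSet_Ioi measurableSet_Ioi measurableSet_Ioi fun s hs t ht => ?_
    rw [mem_Ioi] at *
    linarith

theorem cond_eq_of_forall_marginal_eq (hA : IsConvexBody A) (hB : IsConvexBody B)
    (h : ∀ u ≠ 0, marginal μ A u = marginal μ B u) : μ[|A] = μ[|B] := by
  have := hA.isProbabilityMeasure_cond (μ := μ)
  have := hB.isProbabilityMeasure_cond (μ := μ)
  refine Measure.ext_of_charFunDual (funext fun u => ?_)
  rcases eq_or_ne u 0 with rfl | hu
  · simp [charFunDual_apply]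
  · rw [charFunDual_eq_charFun_map_one, charFunDual_eq_charFun_map_one, ← marginal, ← marginal,
      h u hu]

theorem marginal_eq_marginal_vadd (hA : IsConvexBody A) (hB : IsConvexBody B)
    (hC : IsConvexBody C) (hABC : (2⁻¹ : ℝ) • A + (2⁻¹ : ℝ) • B ⊆ C)
    (hAB : μ.real A = μ.real B) (hCA : μ.real C ≤ μ.real A) (hu : u ≠ 0) :
    marginal μ A u = marginal μ ((barycenter μ A - barycenter μ B) +ᵥ B) u := by
  have := isProbabilityMeasure_marginal hB (μ := μ) (u := u)
  obtain ⟨c, hc⟩ := exists_map_add_marginal_eq hA hB hC hABC hAB hCA hu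
  have hcu : u (barycenter μ A) = u (barycenter μ B) + c := calc
    u (barycenter μ A) = ∫ t, t + c ∂marginal μ B u := by
      rw [← integral_marginal hA, ← hc, integral_map (by fun_prop) (by fun_prop)]
    _ = u (barycenter μ B) + c := by
      rw [integral_add (integrable_id_marginal hB) (integrable_const c), integral_marginal hB,
        integral_const, probReal_univ, one_smul]
  rw [marginal_vadd hB.measurableSet, map_sub, hcu, add_sub_cancel_left, hc]

variable [Nontrivial E]

theorem exists_eq_vadd_of_volRadius_add_le (hA : IsConvexBody A) (hB : IsConvexBody B)
    (hAB : volRadius μ A = volRadius μ B)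
    (h : volRadius μ (A + B) ≤ volRadius μ A + volRadius μ B) :
    ∃ v : E, A = v +ᵥ B := by
  have hreal : μ.real A = μ.real B := by
    rw [← volRadius_pow_finrank, hAB, volRadius_pow_finrank]
  have hmid : μ.real ((2⁻¹ : ℝ) • (A + B)) ≤ μ.real A := by
    rw [← volRadius_pow_finrank, ← volRadius_pow_finrank (A := A), volRadius_smul,
      abs_of_pos (by norm_num)]
    exact pow_le_pow_left₀ (mul_nonneg (by norm_num) volRadius_nonneg) (by linarith) _
  have hC : IsConvexBody ((2⁻¹ : ℝ) • (A + B)) := (hA.add hB).smul (by norm_num)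
  have hv := hB.vadd (barycenter μ A - barycenter μ B)
  have hcond := cond_eq_of_forall_marginal_eq hA hv fun u hu =>
    marginal_eq_marginal_vadd hA hB hC (smul_add _ A B).superset hreal hmid hu
  exact ⟨_, (hA.subset_of_cond_eq hv hcond).antisymm (hv.subset_of_cond_eq hA hcond.symm)⟩

end BrunnMinkowskiEquality

section RealInequalities

theorem pow_add_pow_le_pow {a b c : ℝ} (ha : 0 ≤ a) (hb : 0 ≤ b) (hc : 0 ≤ c)
    (h : a ^ 2 + b ^ 2 ≤ c ^ 2) {n : ℕ} (hn : 2 ≤ n) : a ^ n + b ^ n ≤ c ^ n := by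
  have hac : a ≤ c := le_of_sq_le_sq (by nlinarith) hc
  have hbc : b ≤ c := le_of_sq_le_sq (by nlinarith) hc
  induction n, hn using Nat.le_induction with
  | base => exact h
  | succ k _ ih => calc
      a ^ (k + 1) + b ^ (k + 1) = a ^ k * a + b ^ k * b := by rw [pow_succ, pow_succ]
      _ ≤ a ^ k * c + b ^ k * c := by gcongr
      _ = (a ^ k + b ^ k) * c := (add_mul _ _ _).symm
      _ ≤ c ^ (k + 1) := by rw [pow_succ]; gcongr

theorem natCast_lt_two_mul_div_succ_pow {k : ℕ} (hk : 2 ≤ k) :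
    (k : ℝ) < (2 * k / (k + 1)) ^ (k + 1) := by
  have hk' : (2 : ℝ) ≤ k := by exact_mod_cast hk
  have hs : (0 : ℝ) < (k - 1) / (k + 1) := div_pos (by linarith) (by linarith)
  have bernoulli := one_add_mul_self_lt_rpow_one_add (by linarith) hs.ne'
    (show (1 : ℝ) < (k + 1 : ℕ) by push_cast; linarith)
  rw [Real.rpow_natCast] at bernoulli
  convert bernoulli using 1
  · push_cast
    field_simp
    ring
  · congr 1
    field_simp
    ring

theorem prod_le_sum_div_card_pow {ι : Type*} {s : Finset ι} (hs : s.Nonempty) {z : ι → ℝ}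
    (hz : ∀ i ∈ s, 0 ≤ z i) : ∏ i ∈ s, z i ≤ ((∑ i ∈ s, z i) / s.card) ^ s.card := by
  have amgm := Real.geom_mean_le_arith_mean s (fun _ => 1) z (fun _ _ => zero_le_one)
    (by simpa using hs) hz
  simp only [Real.rpow_one, one_mul, Finset.sum_const, nsmul_eq_mul, mul_one] at amgm
  have hprod : 0 ≤ ∏ i ∈ s, z i := Finset.prod_nonneg hz
  calc ∏ i ∈ s, z i = ((∏ i ∈ s, z i) ^ ((s.card : ℝ)⁻¹)) ^ s.card :=
        (Real.rpow_inv_natCast_pow hprod hs.card_pos.ne').symm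
    _ ≤ ((∑ i ∈ s, z i) / s.card) ^ s.card := by gcongr

theorem mul_pow_lt_two_mul_sqrt_div_pow {a b : ℝ} (hb : 0 < b) (hba : b ≤ a)
    {k : ℕ} (hk : 2 ≤ k) : a * (b / k) ^ k < (2 * √(a * b) / (k + 1)) ^ (k + 1) := by
  have hk0 : (0 : ℝ) < k := by exact_mod_cast (by lia : 0 < k)
  have ha : 0 < a := hb.trans_le hba
  obtain ⟨l, rfl⟩ : ∃ l, k = l + 1 := ⟨k - 1, by lia⟩
  set k := l + 1
  set g := √(a * b)
  have hg2 : a * b = g ^ 2 := (Real.sq_sqrt (by positivity)).symm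
  have hbg : b ≤ g := Real.le_sqrt_of_sq_le (by nlinarith)
  have hg0 : 0 < g := hb.trans_le hbg
  calc a * (b / k) ^ k = a * b * b ^ l / k ^ k := by rw [div_pow, pow_succ b]; ring
    _ ≤ a * b * g ^ l / k ^ k := by gcongr
    _ = k * (g / k) ^ (k + 1) := by rw [hg2, div_pow, pow_succ (k : ℝ)]; field_simp; ring
    _ < (2 * k / (k + 1)) ^ (k + 1) * (g / k) ^ (k + 1) := by
      gcongr
      exact natCast_lt_two_mul_div_succ_pow hk
    _ = (2 * g / (k + 1)) ^ (k + 1) := by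
      rw [← mul_pow]
      congr 1
      field_simp

variable {ι : Type*} [Fintype ι] {z : ι → ℝ}

theorem card_mul_geom_mean_lt_two_mul_sqrt [DecidableEq ι] (hι : 2 < Fintype.card ι)
    (hz : ∀ i, 0 < z i) {j : ι} (hj : ∑ i ∈ Finset.univ.erase j, z i ≤ z j) :
    Fintype.card ι * (∏ i, z i) ^ ((1 : ℝ) / Fintype.card ι) <
      2 * √(z j * ∑ i ∈ Finset.univ.erase j, z i) := by
  have hcard : (Finset.univ.erase j).card + 1 = Fintype.card ι :=
    Finset.card_erase_add_one (Finset.mem_univ j)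
  have hs : (Finset.univ.erase j).Nonempty := Finset.card_pos.1 (by lia)
  have hι0 : (0 : ℝ) < Fintype.card ι := by exact_mod_cast (by lia : 0 < Fintype.card ι)
  have hprod : 0 ≤ ∏ i, z i := Finset.prod_nonneg fun i _ => (hz i).le
  have amgm := prod_le_sum_div_card_pow hs fun i _ => (hz i).le
  have hlt := mul_pow_lt_two_mul_sqrt_div_pow (Finset.sum_pos (fun i _ => hz i) hs) hj
    (k := (Finset.univ.erase j).card) (by lia)
  rw [show ((Finset.univ.erase j).card + 1 : ℝ) = Fintype.card ι by exact_mod_cast hcard,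
    hcard] at hlt
  rw [← lt_div_iff₀' hι0]
  refine lt_of_pow_lt_pow_left₀ (Fintype.card ι) (by positivity) ?_
  rw [one_div, Real.rpow_inv_natCast_pow hprod (by lia),
    ← Finset.mul_prod_erase Finset.univ z (Finset.mem_univ j)]
  exact (mul_le_mul_of_nonneg_left amgm (hz j).le).trans_lt hlt

theorem eq_sum_div_card_of_sum_le (hι : 0 < Fintype.card ι) (hz : ∀ i, 0 ≤ z i)
    (h : ∑ i, z i ≤ Fintype.card ι * (∏ i, z i) ^ ((1 : ℝ) / Fintype.card ι)) (i : ι) :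
    z i = (∑ i, z i) / Fintype.card ι := by
  have hι0 : (0 : ℝ) < Fintype.card ι := by exact_mod_cast hι
  have weights_sum : ∑ _i : ι, (1 : ℝ) / Fintype.card ι = 1 := by
    simp [hι0.ne']
  have weighted_mean : ∑ i, (1 : ℝ) / Fintype.card ι * z i = (∑ i, z i) / Fintype.card ι := by
    rw [← Finset.mul_sum, one_div_mul_eq_div]
  have amgm := Real.geom_mean_le_arith_mean_weighted Finset.univ
    (fun _ : ι => (1 : ℝ) / Fintype.card ι) z (fun _ _ => by positivity) weights_sum
    fun i _ => hz i
  have amgm_eq := Real.geom_mean_eq_arith_mean_weighted_iff_of_pos' Finset.univ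
    (fun _ : ι => (1 : ℝ) / Fintype.card ι) z (fun _ _ => by positivity) weights_sum
    fun i _ => hz i
  rw [Real.finsetProd_rpow _ _ fun i _ => hz i, weighted_mean] at amgm amgm_eq
  exact amgm_eq.1 (amgm.antisymm ((div_le_iff₀' hι0).2 h)) i (Finset.mem_univ i)

theorem card_mul_geom_mean_const (hι : 0 < Fintype.card ι) {c : ℝ} (hc : 0 ≤ c) :
    Fintype.card ι * (∏ _i : ι, c) ^ ((1 : ℝ) / Fintype.card ι) = Fintype.card ι * c := by
  rw [Finset.prod_const, Finset.card_univ, one_div, Real.pow_rpow_inv_natCast hc hι.ne']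

end RealInequalities

section FrontierSum

variable {E : Type*} [NormedAddCommGroup E] [NormedSpace ℝ E] [MeasurableSpace E]
  {μ : Measure E} {A B : Set E}

theorem volRadius_pos [IsFiniteMeasureOnCompacts μ] [μ.IsOpenPosMeasure] (hA : IsConvexBody A) :
    0 < volRadius μ A :=
  Real.rpow_pos_of_pos (ENNReal.toReal_pos hA.measure_ne_zero hA.measure_ne_top) _

variable [BorelSpace E] [FiniteDimensional ℝ E] [μ.IsAddHaarMeasure]

theorem volRadius_preimage_sub_left (hA : MeasurableSet A) (x : E) :
    volRadius μ ((x - ·) ⁻¹' A) = volRadius μ A := by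
  rw [volRadius, (Measure.measurePreserving_sub_left μ x).measureReal_preimage
    hA.nullMeasurableSet, volRadius]

theorem volRadius_lt_of_subset_interior [Nontrivial E] (hA : IsCompact A) (hB : IsCompact B)
    (hA' : A.Nonempty) (h : A ⊆ interior B) : volRadius μ A < volRadius μ B := by
  have hne : (interior B \ A).Nonempty := by
    by_contra hne
    have hBA : interior B = A := (sdiff_eq_empty.1 (not_nonempty_iff_eq_empty.1 hne)).antisymm h
    rcases isClopen_iff.1 ⟨hA.isClosed, hBA ▸ isOpen_interior⟩ with h0 | h0
    · exact hA'.ne_empty h0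
    · have := NormedSpace.noncompactSpace ℝ E
      exact noncompact_univ E (h0 ▸ hA)
  have hlt : μ.real A < μ.real B := by
    refine (ENNReal.toReal_lt_toReal hA.measure_lt_top.ne hB.measure_lt_top.ne).2 ?_
    calc μ A < μ A + μ (interior B \ A) := ENNReal.lt_add_right hA.measure_lt_top.ne
          ((isOpen_interior.sdiff hA.isClosed).measure_pos μ hne).ne'
      _ = μ (interior B) := by
        rw [← measure_union disjoint_sdiff_right (isOpen_interior.sdiff hA.isClosed).measurableSet,
          union_sdiff_cancel h]
      _ ≤ μ B := measure_mono interior_subset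
  exact Real.rpow_lt_rpow measureReal_nonneg hlt
    (inv_pos.2 (Nat.cast_pos.2 Module.finrank_pos))

theorem not_subset_preimage_sub_left_interior [Nontrivial E] (hA : IsConvexBody A)
    (hB : IsConvexBody B) (h : volRadius μ B ≤ volRadius μ A) (x : E) :
    ¬ A ⊆ (x - ·) ⁻¹' interior B := by
  intro hsub
  have hpre := hB.preimage_sub_left x
  have hlt := volRadius_lt_of_subset_interior (μ := μ) hA.isCompact hpre.isCompact hA.nonempty
    (hsub.trans ((Homeomorph.subLeft x).preimage_interior B).subset)
  rw [volRadius_preimage_sub_left hB.measurableSet] at hlt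
  exact hlt.not_ge h

theorem volRadius_minkowskiDiff_add_le [Nontrivial E] (hA : IsCompact A) (hB : IsCompact B)
    (hB' : B.Nonempty) (hD : (minkowskiDiff A B).Nonempty) :
    volRadius μ (minkowskiDiff A B) + volRadius μ B ≤ volRadius μ A :=
  (volRadius_add_le (isCompact_minkowskiDiff hA hA.isClosed hB') hB hD hB').trans
    (volRadius_mono minkowskiDiff_add_subset hA.measure_lt_top.ne)

variable {ι : Type*} [Fintype ι] {K : ι → Set E}

theorem sum_frontier_subset {F : Type*} [NormedAddCommGroup F] {K : ι → Set F}
    (hK : ∀ i, IsClosed (K i)) : ∑ i, frontier (K i) ⊆ ∑ i, K i :=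
  finsetSum_subset_finsetSum _ _ _ fun i _ => (hK i).frontier_subset

variable [DecidableEq ι] {j : ι}

theorem sum_subset_sum_frontier_union (hE : 1 < Module.finrank ℝ E) (hK : ∀ i, IsConvexBody (K i))
    (hj : ∀ i, volRadius μ (K i) ≤ volRadius μ (K j)) :
    ∑ i, K i ⊆ (∑ i, frontier (K i)) ∪ minkowskiDiff (K j) (-∑ i ∈ Finset.univ.erase j, K i) := by
  have : Nontrivial E := Module.nontrivial_of_finrank_pos (zero_lt_one.trans hE)
  intro x hx
  refine or_iff_not_imp_left.2 fun hxf => ?_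
  rw [← Finset.add_sum_erase _ _ (Finset.mem_univ j)] at hx hxf
  exact minkowskiDiff_mono_left interior_subset (mem_minkowskiDiff_of_notMem_sum_frontier
    (Module.lt_rank_of_lt_finrank (by exact_mod_cast hE)) (fun i _ => hK i) (hK j)
    (fun i _ => not_subset_preimage_sub_left_interior (hK j) (hK i) (hj i)) x hx hxf)

theorem volRadius_minkowskiDiff_add_sum_le [Nontrivial E] (hK : ∀ i, IsConvexBody (K i))
    (hD : (minkowskiDiff (K j) (-∑ i ∈ Finset.univ.erase j, K i)).Nonempty) :
    volRadius μ (minkowskiDiff (K j) (-∑ i ∈ Finset.univ.erase j, K i)) +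
      ∑ i ∈ Finset.univ.erase j, volRadius μ (K i) ≤ volRadius μ (K j) := by
  have sum_le := sum_volRadius_le (μ := μ) (s := Finset.univ.erase j)
    (fun i _ => (hK i).isCompact) fun i _ => (hK i).nonempty
  have diff_le := volRadius_minkowskiDiff_add_le (μ := μ) (hK j).isCompact
    (isCompact_finsetSum fun i (_ : i ∈ Finset.univ.erase j) => (hK i).isCompact).neg
    (nonempty_finsetSum fun i _ => (hK i).nonempty).neg hD
  rw [volRadius_neg] at diff_le
  linarith

theorem minkowskiDiff_nonempty_of_sum_frontier_ne (hE : 1 < Module.finrank ℝ E)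
    (hK : ∀ i, IsConvexBody (K i)) (hj : ∀ i, volRadius μ (K i) ≤ volRadius μ (K j))
    (hne : ∑ i, frontier (K i) ≠ ∑ i, K i) :
    (minkowskiDiff (K j) (-∑ i ∈ Finset.univ.erase j, K i)).Nonempty := by
  by_contra hD
  rw [not_nonempty_iff_eq_empty] at hD
  refine hne ((sum_frontier_subset fun i => (hK i).isCompact.isClosed).antisymm ?_)
  simpa [hD] using sum_subset_sum_frontier_union hE hK hj

-- With `a = r j` and `b = ∑ i ≠ j, r i`, the volume of the frontier sum is at least
-- `(a + b) ^ d - (a - b) ^ d ≥ (2 * √(a * b)) ^ d`, where `d ≥ 2` is the dimension.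
theorem two_mul_sqrt_le_volRadius_sum_frontier (hE : 1 < Module.finrank ℝ E)
    (hK : ∀ i, IsConvexBody (K i)) (hj : ∀ i, volRadius μ (K i) ≤ volRadius μ (K j))
    (hD : (minkowskiDiff (K j) (-∑ i ∈ Finset.univ.erase j, K i)).Nonempty) :
    2 * √(volRadius μ (K j) * ∑ i ∈ Finset.univ.erase j, volRadius μ (K i)) ≤
      volRadius μ (∑ i, frontier (K i)) := by
  have : Nontrivial E := Module.nontrivial_of_finrank_pos (zero_lt_one.trans hE)
  set D := minkowskiDiff (K j) (-∑ i ∈ Finset.univ.erase j, K i)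
  have diff_le := volRadius_minkowskiDiff_add_sum_le (μ := μ) hK hD
  have sum_le := sum_volRadius_le (μ := μ) (s := Finset.univ)
    (fun i _ => (hK i).isCompact) fun i _ => (hK i).nonempty
  rw [← Finset.add_sum_erase _ (fun i => volRadius μ (K i)) (Finset.mem_univ j)] at sum_le
  have hb : 0 ≤ ∑ i ∈ Finset.univ.erase j, volRadius μ (K i) :=
    Finset.sum_nonneg fun i _ => volRadius_nonneg
  set a := volRadius μ (K j)
  set b := ∑ i ∈ Finset.univ.erase j, volRadius μ (K i)
  set S := ∑ i, frontier (K i)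
  have hD0 : 0 ≤ volRadius μ D := volRadius_nonneg
  have ha : 0 ≤ a := volRadius_nonneg
  have sqrt_le : (a - b) ^ Module.finrank ℝ E + (2 * √(a * b)) ^ Module.finrank ℝ E ≤
      (a + b) ^ Module.finrank ℝ E := by
    refine pow_add_pow_le_pow (by linarith) (by positivity) (by positivity) (le_of_eq ?_) hE
    rw [mul_pow, Real.sq_sqrt (by positivity)]
    ring
  have measure_le : μ.real (∑ i, K i) ≤ μ.real S + μ.real D := by
    have hS : IsCompact S := isCompact_finsetSum fun i _ => (hK i).isCompact.of_isClosed_subset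
      isClosed_frontier (hK i).isCompact.isClosed.frontier_subset
    have hDc : IsCompact D := isCompact_minkowskiDiff (hK j).isCompact (hK j).isCompact.isClosed
      (nonempty_finsetSum fun i _ => (hK i).nonempty).neg
    have hSD : μ (S ∪ D) ≠ ⊤ := (hS.union hDc).measure_lt_top.ne
    exact (measureReal_mono (sum_subset_sum_frontier_union hE hK hj) hSD).trans
      (measureReal_union_le _ _)
  simp only [← volRadius_pow_finrank] at measure_le
  refine le_of_pow_le_pow_left₀ (by lia : Module.finrank ℝ E ≠ 0) volRadius_nonneg ?_
  have h₁ := pow_le_pow_left₀ (add_nonneg ha hb) sum_le (Module.finrank ℝ E)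
  have h₂ := pow_le_pow_left₀ hD0 (by linarith : volRadius μ D ≤ a - b) (Module.finrank ℝ E)
  linarith

end FrontierSum

section EqualityCases

theorem sum_vadd_eq {ι F : Type*} [AddCommGroup F] [Module ℝ F] {L : Set F}
    (hL : Convex ℝ L) (hL' : L.Nonempty) (x : ι → F) (s : Finset ι) :
    ∑ i ∈ s, (x i +ᵥ L) = (∑ i ∈ s, x i) +ᵥ ((s.card : ℝ) • L) := by
  induction s using Finset.cons_induction with
  | empty => simp [hL']
  | cons i s hi ih =>
    rw [Finset.sum_cons, Finset.sum_cons, ih, Finset.card_cons, vadd_add_vadd_comm, Nat.cast_add,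
      Nat.cast_one, add_comm (s.card : ℝ) 1, hL.add_smul zero_le_one s.card.cast_nonneg, one_smul]

variable {E : Type*} [NormedAddCommGroup E] [NormedSpace ℝ E] [MeasurableSpace E] [BorelSpace E]
  {μ : Measure E} [μ.IsAddHaarMeasure] {ι : Type*} {K : ι → Set E}

theorem volRadius_eq_of_forall_exists_eq_vadd (h : ∀ i j, ∃ x : E, K j = x +ᵥ K i) (i j : ι) :
    volRadius μ (K j) = volRadius μ (K i) := by
  obtain ⟨x, hx⟩ := h i j
  rw [hx, volRadius_vadd]

variable [FiniteDimensional ℝ E] [Fintype ι]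

theorem card_mul_geom_mean_volRadius_lt (hE : 1 < Module.finrank ℝ E) (hι : 2 < Fintype.card ι)
    (hK : ∀ i, IsConvexBody (K i)) (hne : ∑ i, frontier (K i) ≠ ∑ i, K i) :
    Fintype.card ι * (∏ i, volRadius μ (K i)) ^ ((1 : ℝ) / Fintype.card ι) <
      volRadius μ (∑ i, frontier (K i)) := by
  classical
  have : Nontrivial E := Module.nontrivial_of_finrank_pos (zero_lt_one.trans hE)
  have : Nonempty ι := Fintype.card_pos_iff.1 (by lia)
  obtain ⟨j, hj⟩ := Finite.exists_max fun i => volRadius μ (K i)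
  have hD := minkowskiDiff_nonempty_of_sum_frontier_ne hE hK hj hne
  have sum_le : ∑ i ∈ Finset.univ.erase j, volRadius μ (K i) ≤ volRadius μ (K j) :=
    (le_add_of_nonneg_left volRadius_nonneg).trans (volRadius_minkowskiDiff_add_sum_le hK hD)
  exact (card_mul_geom_mean_lt_two_mul_sqrt hι (fun i => volRadius_pos (hK i)) sum_le).trans_le
    (two_mul_sqrt_le_volRadius_sum_frontier hE hK hj hD)

theorem volRadius_add_le_of_volRadius_sum_le [Nontrivial E] (hK : ∀ i, IsCompact (K i))
    (hK' : ∀ i, (K i).Nonempty) (h : volRadius μ (∑ i, K i) ≤ ∑ i, volRadius μ (K i)) {i j : ι}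
    (hij : i ≠ j) : volRadius μ (K i + K j) ≤ volRadius μ (K i) + volRadius μ (K j) := by
  classical
  have hj : j ∈ Finset.univ.erase i := Finset.mem_erase.2 ⟨hij.symm, Finset.mem_univ j⟩
  set s := (Finset.univ.erase i).erase j
  have rest_le := sum_volRadius_le (μ := μ) (s := s) (fun i _ => hK i) fun i _ => hK' i
  have add_le := volRadius_add_le (μ := μ) ((hK i).add (hK j))
    (isCompact_finsetSum fun i (_ : i ∈ s) => hK i) ((hK' i).add (hK' j))
    (nonempty_finsetSum fun i _ => hK' i)
  rw [← Finset.add_sum_erase _ _ (Finset.mem_univ i), ← Finset.add_sum_erase _ _ hj, ← add_assoc,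
    ← Finset.add_sum_erase _ (fun i => volRadius μ (K i)) (Finset.mem_univ i),
    ← Finset.add_sum_erase _ (fun i => volRadius μ (K i)) hj] at h
  linarith

theorem exists_eq_vadd_of_volRadius_sum_le [Nontrivial E] (hι : 0 < Fintype.card ι)
    (hK : ∀ i, IsConvexBody (K i))
    (h : volRadius μ (∑ i, K i) ≤
      Fintype.card ι * (∏ i, volRadius μ (K i)) ^ ((1 : ℝ) / Fintype.card ι)) (i j : ι) :
    ∃ x : E, K j = x +ᵥ K i := by
  rcases eq_or_ne j i with rfl | hij
  · exact ⟨0, (zero_vadd E _).symm⟩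
  have sum_le := sum_volRadius_le (μ := μ) (s := Finset.univ)
    (fun i _ => (hK i).isCompact) fun i _ => (hK i).nonempty
  have volRadius_eq := eq_sum_div_card_of_sum_le hι (fun i => volRadius_nonneg) (sum_le.trans h)
  have le_sum : volRadius μ (∑ i, K i) ≤ ∑ i, volRadius μ (K i) := by
    rwa [Finset.prod_congr rfl fun i _ => volRadius_eq i, card_mul_geom_mean_const hι
      (volRadius_eq i ▸ volRadius_nonneg), mul_div_cancel₀ _ (by positivity)] at h
  exact exists_eq_vadd_of_volRadius_add_le (hK j) (hK i)
    ((volRadius_eq j).trans (volRadius_eq i).symm)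
    (volRadius_add_le_of_volRadius_sum_le (fun i => (hK i).isCompact) (fun i => (hK i).nonempty)
      le_sum hij)

theorem sum_frontier_eq_of_forall_exists_eq_vadd (hE : 1 < Module.finrank ℝ E)
    (hι : 2 < Fintype.card ι) (hK : ∀ i, IsConvexBody (K i))
    (h : ∀ i j, ∃ x : E, K j = x +ᵥ K i) : ∑ i, frontier (K i) = ∑ i, K i := by
  classical
  by_contra hne
  have : Nontrivial E := Module.nontrivial_of_finrank_pos (zero_lt_one.trans hE)
  obtain ⟨j⟩ : Nonempty ι := Fintype.card_pos_iff.1 (by lia)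
  have volRadius_eq := volRadius_eq_of_forall_exists_eq_vadd (μ := Measure.addHaar) h j
  have hD := minkowskiDiff_nonempty_of_sum_frontier_ne hE hK (fun i => (volRadius_eq i).le) hne
  have sum_le := (le_add_of_nonneg_left volRadius_nonneg).trans
    (volRadius_minkowskiDiff_add_sum_le (μ := Measure.addHaar) hK hD)
  have two_le : (2 : ℝ) ≤ (Finset.univ.erase j).card := by
    rw [Finset.card_erase_of_mem (Finset.mem_univ j), Finset.card_univ]
    exact_mod_cast (by lia : 2 ≤ Fintype.card ι - 1)
  rw [Finset.sum_congr rfl fun i _ => volRadius_eq i, Finset.sum_const, nsmul_eq_mul] at sum_le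
  nlinarith [volRadius_pos (μ := Measure.addHaar) (hK j)]

theorem volRadius_sum_of_forall_exists_eq_vadd [Nontrivial E] (hι : 0 < Fintype.card ι)
    (hKconv : ∀ i, Convex ℝ (K i)) (hK : ∀ i, (K i).Nonempty)
    (h : ∀ i j, ∃ x : E, K j = x +ᵥ K i) :
    volRadius μ (∑ i, K i) =
      Fintype.card ι * (∏ i, volRadius μ (K i)) ^ ((1 : ℝ) / Fintype.card ι) := by
  obtain ⟨j⟩ : Nonempty ι := Fintype.card_pos_iff.1 hι
  choose x hx using h j
  rw [Finset.prod_congr rfl fun i _ => volRadius_eq_of_forall_exists_eq_vadd h j i,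
    card_mul_geom_mean_const hι volRadius_nonneg, Finset.sum_congr rfl fun i _ => hx i,
    sum_vadd_eq (hKconv j) (hK j), volRadius_vadd, volRadius_smul, Nat.abs_cast, Finset.card_univ]

theorem volRadius_sum_frontier_eq_iff (hE : 1 < Module.finrank ℝ E) (hι : 2 < Fintype.card ι)
    (hK : ∀ i, IsConvexBody (K i)) :
    volRadius μ (∑ i, frontier (K i)) =
        Fintype.card ι * (∏ i, volRadius μ (K i)) ^ ((1 : ℝ) / Fintype.card ι) ↔
      ∀ i j, ∃ x : E, K j = x +ᵥ K i := by
  have : Nontrivial E := Module.nontrivial_of_finrank_pos (zero_lt_one.trans hE)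
  refine ⟨fun h => ?_, fun h => ?_⟩
  · have sum_eq : ∑ i, frontier (K i) = ∑ i, K i :=
      by_contra fun hne => (card_mul_geom_mean_volRadius_lt hE hι hK hne).ne' h
    exact exists_eq_vadd_of_volRadius_sum_le (by lia) hK (sum_eq ▸ h.le)
  · rw [sum_frontier_eq_of_forall_exists_eq_vadd hE hι hK h]
    exact volRadius_sum_of_forall_exists_eq_vadd (by lia) (fun i => (hK i).convex)
      (fun i => (hK i).nonempty) h

theorem measureReal_inv_smul_eq_geom_mean_iff [Nontrivial E] {S : Set E}
    (hι : 0 < Fintype.card ι) :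
    μ.real ((Fintype.card ι : ℝ)⁻¹ • S) =
        (∏ i, μ.real (K i)) ^ ((1 : ℝ) / Fintype.card ι) ↔
      volRadius μ S = Fintype.card ι * (∏ i, volRadius μ (K i)) ^ ((1 : ℝ) / Fintype.card ι) := by
  have hprod : 0 ≤ ∏ i, volRadius μ (K i) := Finset.prod_nonneg fun i _ => volRadius_nonneg
  simp only [← volRadius_pow_finrank]
  rw [Finset.prod_pow, ← Real.rpow_pow_comm hprod,
    pow_left_inj₀ volRadius_nonneg (Real.rpow_nonneg hprod _) Module.finrank_pos.ne',
    volRadius_smul, abs_inv, Nat.abs_cast, inv_mul_eq_iff_eq_mul₀ (by positivity)]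

end EqualityCases

end BoundarySum

theorem multi_boundary_sum_average_equality_cases_general {E : Type*} [NormedAddCommGroup E]
    [NormedSpace ℝ E] [FiniteDimensional ℝ E] [MeasurableSpace E] [BorelSpace E] (μ : Measure E)
    [μ.IsAddHaarMeasure] {ι : Type*} [Fintype ι] (hE : 1 < Module.finrank ℝ E)
    (hι : 2 < Fintype.card ι) (K : ι → Set E) (hK : ∀ i, BoundarySum.IsConvexBody (K i)) :
    μ.real ((Fintype.card ι : ℝ)⁻¹ • ∑ i, frontier (K i)) =
        (∏ i, μ.real (K i)) ^ ((1 : ℝ) / Fintype.card ι) ↔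
      ∀ i j, ∃ x : E, K j = x +ᵥ K i := by
  have : Nontrivial E := Module.nontrivial_of_finrank_pos (zero_lt_one.trans hE)
  exact (BoundarySum.measureReal_inv_smul_eq_geom_mean_iff (by lia)).trans
    (BoundarySum.volRadius_sum_frontier_eq_iff hE hι hK)

theorem multi_boundary_sum_average_equality_cases (n m : ℕ) (hn : 2 ≤ n) (hm : 2 < m)
    (K : Fin m → Set (EuclideanSpace ℝ (Fin n)))
    (hK : ∀ i, IsCompact (K i)) (hKconv : ∀ i, Convex ℝ (K i))
    (hKint : ∀ i, (interior (K i)).Nonempty) :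
    (volume ((m:ℝ)⁻¹ • (∑ i, frontier (K i)))).toReal =
      (∏ i, (volume (K i)).toReal) ^ ((1:ℝ)/m) ↔
    (∀ i j, ∃ x : EuclideanSpace ℝ (Fin n), K j = x +ᵥ K i) := by
  simpa only [Fintype.card_fin, measureReal_def] using
    multi_boundary_sum_average_equality_cases_general volume
      (hn.trans_eq finrank_euclideanSpace_fin.symm) (hm.trans_eq (Fintype.card_fin m).symm) K
      fun i => ⟨hK i, hKconv i, hKint i⟩
end

section
/- Let n ≥ 2, let K, T ⊆ ℝⁿ be compact sets each with connected boundary, and let λ ∈ (0, 1). Then vol(λ∂K + (1−λ)∂T) · vol(λ∂T + (1−λ)∂K) ≥ vol(K)·vol(T)·(1 − |1 − 2λ|ⁿ)². -/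
open MeasureTheory Pointwise

/-!
Write `r_A` for the `n`-th root of `vol A`, and let `C`, `D` be compact with connected boundaries.
If `x ∈ C + D`, then `x - C` meets `D`; if moreover `x ∉ ∂C + ∂D`, their boundaries are disjoint,
so by connectedness one of the two sets contains the other. The translations of `-C` lying in `D`
form a set `P` with `P - C ⊆ D`, so by the Brunn–Minkowski inequality `r_P ≤ r_D - r_C` unless `P`
is empty. Applying Brunn–Minkowski to `C + D` as well gives
`vol (∂C + ∂D) ≥ (r_C + r_D)ⁿ - |r_C - r_D|ⁿ =: V(r_C, r_D)`.

It remains to see that `V(lk, mt) V(lt, mk) ≥ (kt)ⁿ V(l, m)²`, where `m = 1 - l`, `k = r_K` and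
`t = r_T`; this is midpoint convexity of `log V` in logarithmic coordinates. On `y ≤ x` the
polynomial `V` has nonnegative coefficients, so this is the Cauchy–Schwarz inequality when both
points lie on the same side of the diagonal. Points on opposite sides are brought to one side by
the symmetry of `V`; that increases the sum of squares at the midpoint but not the product, and
`V` grows by the convexity of `u ↦ u ^ (n / 2)`.

The Brunn–Minkowski inequality follows from its multiplicative form, proved by induction on the
dimension with the one-dimensional Prékopa–Leindler inequality applied to the measures of slices.
-/

open Set Module
open scoped ENNReal

section ShellVolume

theorem add_sub_le_add_sub_of_convexOn {s : Set ℝ} {f : ℝ → ℝ} (hf : ConvexOn ℝ s f) {x y d : ℝ}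
    (hx : x ∈ s) (hyd : y + d ∈ s) (hxy : x ≤ y) (hd : 0 ≤ d) :
    f (x + d) - f x ≤ f (y + d) - f y := by
  rcases hd.eq_or_lt with rfl | hd
  · simp
  have hL : 0 < y + d - x := by linarith
  set θ := d / (y + d - x)
  have hθL : θ * (y + d - x) = d := div_mul_cancel₀ d hL.ne'
  have hθ0 : 0 ≤ θ := by positivity
  have hθ1 : 0 ≤ 1 - θ := sub_nonneg.2 ((div_le_one hL).2 (by linarith))
  have h₁ : f (x + d) ≤ (1 - θ) * f x + θ * f (y + d) := by
    have := hf.2 hx hyd hθ1 hθ0 (by ring)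
    simp only [smul_eq_mul] at this
    rwa [show (1 - θ) * x + θ * (y + d) = x + d by linear_combination hθL] at this
  have h₂ : f y ≤ θ * f x + (1 - θ) * f (y + d) := by
    have := hf.2 hx hyd hθ0 hθ1 (by ring)
    simp only [smul_eq_mul] at this
    rwa [show θ * x + (1 - θ) * (y + d) = y by linear_combination -hθL] at this
  linarith

/-- In dimension `n ≥ 2` two centred spheres of radii `x` and `y` have as Minkowski sum the
spherical shell `|x - y| ≤ ‖z‖ ≤ x + y`; this is its volume, in units of the unit ball. -/
def shellVolume (n : ℕ) (x y : ℝ) : ℝ := (x + y) ^ n - |x - y| ^ n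

variable {n : ℕ} {x y x' y' s t : ℝ}

theorem shellVolume_comm (n : ℕ) (x y : ℝ) : shellVolume n x y = shellVolume n y x := by
  simp only [shellVolume, add_comm x y, abs_sub_comm x y]

theorem shellVolume_nonneg (n : ℕ) (hx : 0 ≤ x) (hy : 0 ≤ y) : 0 ≤ shellVolume n x y :=
  sub_nonneg.2 (pow_le_pow_left₀ (abs_nonneg _) (abs_le.2 ⟨by linarith, by linarith⟩) n)

theorem shellVolume_zero_left (n : ℕ) (hy : 0 ≤ y) : shellVolume n 0 y = 0 := by
  rw [shellVolume, zero_add, zero_sub, abs_neg, abs_of_nonneg hy, sub_self]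

theorem shellVolume_mul_right (n : ℕ) (x y : ℝ) {r : ℝ} (hr : 0 ≤ r) :
    shellVolume n (x * r) (y * r) = r ^ n * shellVolume n x y := by
  simp only [shellVolume, ← add_mul, ← sub_mul, abs_mul, abs_of_nonneg hr, mul_pow]
  ring

theorem shellVolume_le_shellVolume (hn : 2 ≤ n) (hs : 0 ≤ s) (ht : 0 ≤ t) (hx : 0 ≤ x)
    (hy : 0 ≤ y) (hmul : s * t = x * y) (hsq : s ^ 2 + t ^ 2 ≤ x ^ 2 + y ^ 2) :
    shellVolume n s t ≤ shellVolume n x y := by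
  have pow_eq (u : ℝ) (hu : 0 ≤ u) : u ^ n = (u ^ 2) ^ ((n : ℝ) / 2) := by
    rw [← Real.rpow_natCast_mul hu, ← Real.rpow_natCast]
    congr 1
    push_cast
    ring
  have hn' : 1 ≤ (n : ℝ) / 2 := by
    rw [le_div_iff₀ two_pos]
    exact_mod_cast hn
  have hconv := add_sub_le_add_sub_of_convexOn (convexOn_rpow hn') (x := (s - t) ^ 2)
    (y := (x - y) ^ 2) (d := 4 * (s * t)) (mem_Ici.2 (sq_nonneg _)) (mem_Ici.2 (by positivity))
    (by linarith) (by positivity)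
  rw [show (s - t) ^ 2 + 4 * (s * t) = (s + t) ^ 2 by ring,
    show (x - y) ^ 2 + 4 * (s * t) = (x + y) ^ 2 by rw [hmul]; ring] at hconv
  rwa [shellVolume, shellVolume, pow_eq _ (by positivity), pow_eq (x + y) (by positivity),
    pow_eq _ (abs_nonneg _), pow_eq _ (abs_nonneg (x - y)), sq_abs, sq_abs]

theorem shellVolume_eq_sum (n : ℕ) (hyx : y ≤ x) :
    shellVolume n x y =
      ∑ j ∈ Finset.range (n + 1), n.choose j * (1 - (-1) ^ (n - j)) * (x ^ j * y ^ (n - j)) := by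
  rw [shellVolume, abs_of_nonneg (sub_nonneg.2 hyx), sub_eq_add_neg x y, add_pow, add_pow,
    ← Finset.sum_sub_distrib]
  refine Finset.sum_congr rfl fun j _ => ?_
  rw [neg_pow y]
  ring

theorem shellVolume_sq_le_mul_of_le (n : ℕ) (hy : 0 ≤ y) (hyx : y ≤ x) (hy' : 0 ≤ y')
    (hyx' : y' ≤ x') (hs : 0 ≤ s) (hsx : s ^ 2 = x * x') (hty : t ^ 2 = y * y') :
    shellVolume n s t ^ 2 ≤ shellVolume n x y * shellVolume n x' y' := by
  have hx : 0 ≤ x := hy.trans hyx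
  have hx' : 0 ≤ x' := hy'.trans hyx'
  have hts : t ≤ s := le_of_sq_le_sq (by rw [hsx, hty]; gcongr) hs
  have coeff_nonneg (j : ℕ) : 0 ≤ (n.choose j : ℝ) * (1 - (-1) ^ (n - j)) := by
    have : (-1 : ℝ) ^ (n - j) ≤ 1 := (le_abs_self _).trans (abs_neg_one_pow _).le
    exact mul_nonneg (Nat.cast_nonneg _) (sub_nonneg.2 this)
  rw [shellVolume_eq_sum n hts, shellVolume_eq_sum n hyx, shellVolume_eq_sum n hyx']
  refine Finset.sum_sq_le_sum_mul_sum_of_sq_le_mul _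
    (fun j _ => mul_nonneg (coeff_nonneg j) (by positivity))
    (fun j _ => mul_nonneg (coeff_nonneg j) (by positivity)) fun j _ => le_of_eq ?_
  have monomial_sq : (s ^ j * t ^ (n - j)) ^ 2 = x ^ j * y ^ (n - j) * (x' ^ j * y' ^ (n - j)) := by
    rw [mul_pow, pow_right_comm s, pow_right_comm t, hsx, hty]
    ring
  rw [mul_pow _ (s ^ j * t ^ (n - j)), monomial_sq]
  ring

theorem shellVolume_sq_le_mul (hn : 2 ≤ n) (hx : 0 ≤ x) (hy : 0 ≤ y) (hx' : 0 ≤ x')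
    (hy' : 0 ≤ y') (hs : 0 ≤ s) (ht : 0 ≤ t) (hsx : s ^ 2 = x * x') (hty : t ^ 2 = y * y') :
    shellVolume n s t ^ 2 ≤ shellVolume n x y * shellVolume n x' y' := by
  wlog hyx : y ≤ x generalizing x y x' y' s t
  · rw [shellVolume_comm n s, shellVolume_comm n x, shellVolume_comm n x']
    exact this hy hx hy' hx' ht hs hty hsx (le_of_not_ge hyx)
  rcases le_total y' x' with hyx' | hxy'
  · exact shellVolume_sq_le_mul_of_le n hy hyx hy' hyx' hs hsx hty
  have hsx' : √(x * y') ^ 2 = x * y' := Real.sq_sqrt (by positivity)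
  have hty' : √(y * x') ^ 2 = y * x' := Real.sq_sqrt (by positivity)
  have hmul : s * t = √(x * y') * √(y * x') := by
    rw [← sq_eq_sq₀ (by positivity) (by positivity), mul_pow, mul_pow, hsx, hty, hsx', hty']
    ring
  have hsq : s ^ 2 + t ^ 2 ≤ √(x * y') ^ 2 + √(y * x') ^ 2 := by
    rw [hsx, hty, hsx', hty']
    linarith [mul_nonneg (sub_nonneg.2 hyx) (sub_nonneg.2 hxy')]
  calc shellVolume n s t ^ 2
      ≤ shellVolume n √(x * y') √(y * x') ^ 2 := by
        gcongr
        · exact shellVolume_nonneg n hs ht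
        · exact shellVolume_le_shellVolume hn hs ht (by positivity) (by positivity) hmul hsq
    _ ≤ shellVolume n x y * shellVolume n y' x' :=
        shellVolume_sq_le_mul_of_le n hy hyx hx' hxy' (by positivity) hsx' hty'
    _ = shellVolume n x y * shellVolume n x' y' := by rw [shellVolume_comm n y']

theorem mul_pow_mul_shellVolume_sq_le (hn : 2 ≤ n) (hs : 0 ≤ s) (ht : 0 ≤ t) (hx : 0 ≤ x)
    (hy : 0 ≤ y) :
    (x * y) ^ n * shellVolume n s t ^ 2 ≤
      shellVolume n (s * x) (t * y) * shellVolume n (s * y) (t * x) := by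
  have hxy : √(x * y) ^ 2 = x * y := Real.sq_sqrt (by positivity)
  calc (x * y) ^ n * shellVolume n s t ^ 2
      = shellVolume n (s * √(x * y)) (t * √(x * y)) ^ 2 := by
        rw [shellVolume_mul_right n s t (Real.sqrt_nonneg _), mul_pow (√(x * y) ^ n),
          pow_right_comm, hxy]
    _ ≤ _ := shellVolume_sq_le_mul hn (by positivity) (by positivity) (by positivity)
        (by positivity) (by positivity) (by positivity) (by rw [mul_pow, hxy]; ring)
        (by rw [mul_pow, hxy]; ring)

end ShellVolume

section Frontier

variable {E : Type*} [TopologicalSpace E]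

theorem subset_interior_or_disjoint_of_disjoint_frontier {S T : Set E} (hS : IsPreconnected S)
    (hT : IsClosed T) (hST : Disjoint S (frontier T)) : S ⊆ interior T ∨ Disjoint S T := by
  have hcover : S ⊆ interior T ∪ Tᶜ := by
    rw [← hT.isOpen_compl.interior_eq, ← compl_frontier_eq_union_interior]
    exact hST.subset_compl_right
  rw [← subset_compl_iff_disjoint_right]
  exact hS.subset_or_subset isOpen_interior hT.isOpen_compl
    (disjoint_compl_right.mono_left interior_subset) hcover

variable [PreconnectedSpace E] [NoncompactSpace E]

theorem eq_empty_of_isCompact_of_frontier_subset_empty {S : Set E} (hS : IsCompact S)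
    (hfS : frontier S ⊆ ∅) : S = ∅ :=
  (frontier_eq_empty_iff.1 (subset_empty_iff.1 hfS)).resolve_right hS.ne_univ

theorem subset_of_frontier_subset_interior [T2Space E] {S T : Set E} (hS : IsCompact S)
    (hST : frontier S ⊆ interior T) (hTS : Disjoint (frontier T) S) : S ⊆ T := by
  have hfr : frontier (S \ interior T) ⊆ ∅ := by
    rw [sdiff_eq]
    refine (frontier_inter_subset _ _).trans (union_subset ?_ ?_)
    · rw [isOpen_interior.isClosed_compl.closure_eq]
      exact fun x hx => hx.2 (hST hx.1)
    · rw [hS.isClosed.closure_eq, frontier_compl]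
      exact fun x hx => hTS.le_bot ⟨frontier_interior_subset hx.2, hx.1⟩
  exact (sdiff_eq_empty.1 (eq_empty_of_isCompact_of_frontier_subset_empty
    (hS.diff isOpen_interior) hfr)).trans interior_subset

theorem subset_or_subset_of_disjoint_frontier [T2Space E] {C D : Set E} (hC : IsCompact C)
    (hD : IsCompact D) (hfC : IsPreconnected (frontier C)) (hfD : IsPreconnected (frontier D))
    (hdisj : Disjoint (frontier C) (frontier D)) (hCD : (C ∩ D).Nonempty) : C ⊆ D ∨ D ⊆ C := by
  rcases subset_interior_or_disjoint_of_disjoint_frontier hfC hD.isClosed hdisj with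
      hCin | hCout <;>
    rcases subset_interior_or_disjoint_of_disjoint_frontier hfD hC.isClosed hdisj.symm with
      hDin | hDout
  · have hfr : frontier (C ∪ D) ⊆ ∅ := by
      refine (frontier_union_subset _ _).trans (union_subset ?_ ?_)
      · rw [closure_compl]
        exact fun x hx => hx.2 (hCin hx.1)
      · rw [closure_compl]
        exact fun x hx => hx.1 (hDin hx.2)
    have hempty := eq_empty_of_isCompact_of_frontier_subset_empty (hC.union hD) hfr
    exact ((hCD.mono (inter_subset_left.trans subset_union_left)).ne_empty hempty).elim
  · exact .inl (subset_of_frontier_subset_interior hC hCin hDout)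
  · exact .inr (subset_of_frontier_subset_interior hD hDin hCout)
  · have hfr : frontier (C ∩ D) ⊆ ∅ := by
      refine (frontier_inter_subset _ _).trans (union_subset ?_ ?_)
      · rw [hD.isClosed.closure_eq]
        exact fun x hx => hCout.le_bot hx
      · rw [hC.isClosed.closure_eq]
        exact fun x hx => hDout.le_bot hx.symm
    exact (hCD.ne_empty (eq_empty_of_isCompact_of_frontier_subset_empty (hC.inter hD) hfr)).elim

end Frontier

section MinkowskiDiff

/-- The Minkowski difference (erosion) of `D` by `C`: the translations that carry `C` into `D`. -/
def minkowskiDiff {E : Type*} [Add E] (D C : Set E) : Set E := {x | ∀ c ∈ C, x + c ∈ D}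

theorem minkowskiDiff_add_subset {E : Type*} [Add E] (D C : Set E) : minkowskiDiff D C + C ⊆ D := by
  rintro _ ⟨x, hx, c, hc, rfl⟩
  exact hx c hc

variable {E : Type*} [TopologicalSpace E] [AddCommGroup E] [IsTopologicalAddGroup E]

theorem isCompact_minkowskiDiff [T2Space E] {C D : Set E} (hD : IsCompact D) (hC : C.Nonempty) :
    IsCompact (minkowskiDiff D C) := by
  obtain ⟨c, hc⟩ := hC
  have hclosed : IsClosed (minkowskiDiff D C) := by
    simp only [minkowskiDiff, ofPred_forall]
    exact isClosed_biInter fun c _ => hD.isClosed.preimage (continuous_add_const c)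
  exact (hD.image (continuous_sub_right c)).of_isClosed_subset hclosed
    fun x hx => ⟨x + c, hx c hc, add_sub_cancel_right x c⟩

/-- For `x ∈ C + D` the sets `x - C` and `D` meet: either their boundaries meet too, or one of the
two sets contains the other. -/
theorem add_subset_frontier_add_frontier_union [T2Space E] [PreconnectedSpace E]
    [NoncompactSpace E] {C D : Set E} (hC : IsCompact C) (hD : IsCompact D)
    (hfC : IsPreconnected (frontier C)) (hfD : IsPreconnected (frontier D)) :
    C + D ⊆ frontier C + frontier D ∪ (minkowskiDiff D (-C) ∪ minkowskiDiff C (-D)) := by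
  rintro _ ⟨c, hc, d, hd, rfl⟩
  let e := Homeomorph.subLeft (c + d)
  have hfe : e '' frontier C = frontier (e '' C) := e.image_frontier C
  by_cases hdisj : Disjoint (frontier (e '' C)) (frontier D)
  · have hmeet : (e '' C ∩ D).Nonempty := ⟨d, ⟨c, hc, add_sub_cancel_left c d⟩, hd⟩
    have hfeC : IsPreconnected (frontier (e '' C)) := hfe ▸ hfC.image e e.continuous.continuousOn
    refine .inr ((subset_or_subset_of_disjoint_frontier (hC.image e.continuous) hD hfeC hfD hdisj
      hmeet).imp (fun hCD y hy => ?_) fun hDC y hy => ?_)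
    · simpa [e] using hCD (mem_image_of_mem e hy)
    · obtain ⟨z, hz, hzy⟩ := hDC hy
      have hzy : c + d - z = -y := hzy
      rwa [show c + d + y = z by rw [sub_eq_iff_eq_add.1 hzy]; abel]
  · rw [← hfe, not_disjoint_iff] at hdisj
    obtain ⟨_, ⟨y, hy, rfl⟩, hyD⟩ := hdisj
    exact .inl ⟨y, hy, _, hyD, add_sub_cancel y (c + d)⟩

end MinkowskiDiff

section PrekopaLeindler

theorem volume_add_volume_le_volume_add_of_isCompact {X Y : Set ℝ} (hX : IsCompact X)
    (hY : IsCompact Y) (hX₀ : X.Nonempty) (hY₀ : Y.Nonempty) :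
    volume X + volume Y ≤ volume (X + Y) := by
  obtain ⟨M, hM⟩ := hX.exists_isGreatest hX₀
  obtain ⟨m, hm⟩ := hY.exists_isLeast hY₀
  have hdisj : AEDisjoint volume (m +ᵥ X) (M +ᵥ Y) := by
    refine measure_mono_null (t := {M + m}) ?_ (measure_singleton _)
    rintro _ ⟨⟨x, hx, rfl⟩, ⟨y, hy, hxy⟩⟩
    simp only [vadd_eq_add, mem_singleton_iff] at hxy ⊢
    linarith [hM.2 hx, hm.2 hy]
  calc volume X + volume Y = volume (m +ᵥ X) + volume (M +ᵥ Y) := by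
        rw [measure_vadd, measure_vadd]
    _ = volume ((m +ᵥ X) ∪ (M +ᵥ Y)) :=
        (measure_union₀ (hY.vadd M).measurableSet.nullMeasurableSet hdisj).symm
    _ ≤ volume (X + Y) := by
        gcongr
        rw [add_comm X Y]
        refine union_subset (vadd_set_subset_add hm.1) ?_
        rw [add_comm]
        exact vadd_set_subset_add hM.1

theorem measure_eq_iSup_isCompact_nonempty {X : Type*} [TopologicalSpace X] [MeasurableSpace X]
    (μ : Measure X) [μ.InnerRegular] {S : Set X} (hS : MeasurableSet S) (hS₀ : S.Nonempty) :
    μ S = ⨆ (K) (_ : K ⊆ S ∧ IsCompact K ∧ K.Nonempty), μ K := by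
  obtain ⟨x, hx⟩ := hS₀
  refine le_antisymm ?_ (iSup₂_le fun K hK => measure_mono hK.1)
  rw [hS.measure_eq_iSup_isCompact]
  refine iSup₂_le fun K hKS => iSup_le fun hK => ?_
  exact le_iSup₂_of_le (insert x K)
    ⟨insert_subset hx hKS, hK.insert x, insert_nonempty x K⟩ (measure_mono (subset_insert x K))

theorem volume_add_volume_le_volume_add {X Y : Set ℝ} (hX : MeasurableSet X) (hY : MeasurableSet Y)
    (hX₀ : X.Nonempty) (hY₀ : Y.Nonempty) : volume X + volume Y ≤ volume (X + Y) := by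
  rw [measure_eq_iSup_isCompact_nonempty volume hX hX₀,
    measure_eq_iSup_isCompact_nonempty volume hY hY₀]
  obtain ⟨x, hx⟩ := hX₀
  obtain ⟨y, hy⟩ := hY₀
  refine ENNReal.biSup_add_biSup_le' ?_ ?_ fun K ⟨hKX, hK, hK₀⟩ L ⟨hLY, hL, hL₀⟩ =>
    (volume_add_volume_le_volume_add_of_isCompact hK hL hK₀ hL₀).trans
      (measure_mono (add_subset_add hKX hLY))
  · exact ⟨{x}, singleton_subset_iff.2 hx, isCompact_singleton, singleton_nonempty x⟩
  · exact ⟨{y}, singleton_subset_iff.2 hy, isCompact_singleton, singleton_nonempty y⟩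

theorem lintegral_eq_lintegral_measure_lt {α : Type*} [MeasurableSpace α] (μ : Measure α)
    {f : α → ℝ≥0∞} (hf : Measurable f) (hf' : ∀ x, f x ≠ ∞) :
    ∫⁻ x, f x ∂μ = ∫⁻ t in Ioi 0, μ {x | ENNReal.ofReal t < f x} := by
  have hlt (t : ℝ) (ht : 0 < t) (x : α) : t < (f x).toReal ↔ ENNReal.ofReal t < f x :=
    (ENNReal.ofReal_lt_iff_lt_toReal ht.le (hf' x)).symm
  calc ∫⁻ x, f x ∂μ = ∫⁻ x, ENNReal.ofReal (f x).toReal ∂μ := by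
        simp only [ENNReal.ofReal_toReal (hf' _)]
    _ = ∫⁻ t in Ioi 0, μ {x | t < (f x).toReal} :=
        lintegral_eq_lintegral_meas_lt μ (.of_forall fun _ => ENNReal.toReal_nonneg)
          hf.ennreal_toReal.aemeasurable
    _ = ∫⁻ t in Ioi 0, μ {x | ENNReal.ofReal t < f x} :=
        setLIntegral_congr_fun measurableSet_Ioi fun t ht => by
          simp only [hlt t ht]

variable {f g h : ℝ → ℝ≥0∞} {a b : ℝ}

theorem mul_lintegral_add_mul_lintegral_le_of_min_le (hf : Measurable f) (hg : Measurable g)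
    (hh : Measurable h) (hf' : ∀ x, f x ≠ ∞) (hg' : ∀ x, g x ≠ ∞) (hh' : ∀ x, h x ≠ ∞)
    (ha : 0 < a) (hb : 0 < b) (hsup : (⨆ x, f x) = ⨆ x, g x)
    (hmin : ∀ x y, min (f x) (g y) ≤ h (a * x + b * y)) :
    ENNReal.ofReal a * (∫⁻ x, f x) + ENNReal.ofReal b * (∫⁻ x, g x) ≤ ∫⁻ x, h x := by
  have measurable_superlevel (u : ℝ → ℝ≥0∞) :
      Measurable fun t : ℝ => volume {x | ENNReal.ofReal t < u x} :=
    Antitone.measurable fun s t hst =>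
      measure_mono fun x hx => (ENNReal.ofReal_le_ofReal hst).trans_lt hx
  have volume_smul {c : ℝ} (hc : 0 < c) (S : Set ℝ) :
      ENNReal.ofReal c * volume S = volume (c • S) := by
    simp [Measure.addHaar_smul_of_nonneg _ hc.le]
  rw [lintegral_eq_lintegral_measure_lt _ hf hf', lintegral_eq_lintegral_measure_lt _ hg hg',
    lintegral_eq_lintegral_measure_lt _ hh hh', ← lintegral_const_mul _ (measurable_superlevel f),
    ← lintegral_const_mul _ (measurable_superlevel g),
    ← lintegral_add_left ((measurable_superlevel f).const_mul _)]
  refine lintegral_mono fun t => ?_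
  have hiff : {x | ENNReal.ofReal t < f x}.Nonempty ↔ {x | ENNReal.ofReal t < g x}.Nonempty :=
    (lt_iSup_iff (f := f)).symm.trans (hsup ▸ lt_iSup_iff)
  rcases {x | ENNReal.ofReal t < f x}.eq_empty_or_nonempty with hF | hF
  · have hG : {x | ENNReal.ofReal t < g x} = ∅ := by
      rwa [← not_nonempty_iff_eq_empty, ← hiff, not_nonempty_iff_eq_empty]
    simp [hF, hG]
  rw [volume_smul ha, volume_smul hb]
  refine (volume_add_volume_le_volume_add ((measurableSet_lt measurable_const hf).const_smul₀ a)
    ((measurableSet_lt measurable_const hg).const_smul₀ b) hF.smul_set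
    (hiff.1 hF).smul_set).trans (measure_mono ?_)
  rintro _ ⟨_, ⟨x, hx, rfl⟩, _, ⟨y, hy, rfl⟩, rfl⟩
  exact (lt_min hx hy).trans_le (hmin x y)

theorem rpow_mul_rpow_le_ofReal_mul_add_ofReal_mul (ha : 0 < a) (hb : 0 < b) (hab : a + b = 1)
    (x y : ℝ≥0∞) : x ^ a * y ^ b ≤ ENNReal.ofReal a * x + ENNReal.ofReal b * y := by
  have := ENNReal.young_inequality (x ^ a) (y ^ b) (Real.HolderConjugate.inv_inv ha hb hab)
  rw [ENNReal.rpow_rpow_inv ha.ne', ENNReal.rpow_rpow_inv hb.ne', ENNReal.ofReal_inv_of_pos ha,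
    ENNReal.ofReal_inv_of_pos hb, ENNReal.div_eq_inv_mul, ENNReal.div_eq_inv_mul, inv_inv,
    inv_inv] at this
  exact this

theorem min_le_rpow_mul_rpow (ha : 0 ≤ a) (hb : 0 ≤ b) (hab : a + b = 1) (x y : ℝ≥0∞) :
    min x y ≤ x ^ a * y ^ b := by
  calc min x y = min x y ^ a * min x y ^ b := by
        rw [← ENNReal.rpow_add_of_nonneg a b ha hb, hab, ENNReal.rpow_one]
    _ ≤ x ^ a * y ^ b := by
        gcongr
        exacts [min_le_left x y, min_le_right x y]

theorem div_rpow_mul_div_rpow (ha : 0 ≤ a) (hb : 0 ≤ b) (u v : ℝ≥0∞) {M N : ℝ≥0∞} (hM₀ : M ≠ 0)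
    (hM : M ≠ ∞) : (u / M) ^ a * (v / N) ^ b = u ^ a * v ^ b / (M ^ a * N ^ b) := by
  rw [ENNReal.div_rpow_of_nonneg _ _ ha, ENNReal.div_rpow_of_nonneg _ _ hb,
    ENNReal.mul_div_mul_comm (.inl (ENNReal.rpow_pos (pos_iff_ne_zero.2 hM₀) hM).ne')
      (.inl (ENNReal.rpow_ne_top_of_nonneg ha hM))]

theorem prekopaLeindler_real (hf : Measurable f) (hg : Measurable g) (hh : Measurable h)
    (hf' : (⨆ x, f x) ≠ ∞) (hg' : (⨆ x, g x) ≠ ∞) (hh' : ∀ x, h x ≠ ∞)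
    (ha : 0 < a) (hb : 0 < b) (hab : a + b = 1)
    (hfgh : ∀ x y, f x ^ a * g y ^ b ≤ h (a * x + b * y)) :
    (∫⁻ x, f x) ^ a * (∫⁻ x, g x) ^ b ≤ ∫⁻ x, h x := by
  set M := ⨆ x, f x
  set N := ⨆ x, g x
  rcases eq_or_ne M 0 with hM₀ | hM₀
  · have hf₀ : ∀ x, f x = 0 := ENNReal.iSup_eq_zero.1 hM₀
    simp [hf₀, ha]
  rcases eq_or_ne N 0 with hN₀ | hN₀
  · have hg₀ : ∀ x, g x = 0 := ENNReal.iSup_eq_zero.1 hN₀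
    simp [hg₀, hb]
  have hMN₀ : M ^ a * N ^ b ≠ 0 :=
    mul_ne_zero (ENNReal.rpow_pos (pos_iff_ne_zero.2 hM₀) hf').ne'
      (ENNReal.rpow_pos (pos_iff_ne_zero.2 hN₀) hg').ne'
  have hMN' : M ^ a * N ^ b ≠ ∞ :=
    ENNReal.mul_ne_top (ENNReal.rpow_ne_top_of_nonneg ha.le hf')
      (ENNReal.rpow_ne_top_of_nonneg hb.le hg')
  have lintegral_div_const {u : ℝ → ℝ≥0∞} (hu : Measurable u) (c : ℝ≥0∞) :
      ∫⁻ x, u x / c = (∫⁻ x, u x) / c := by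
    simp only [div_eq_mul_inv, lintegral_mul_const _ hu]
  have hnormalized := mul_lintegral_add_mul_lintegral_le_of_min_le (f := fun x => f x / M)
    (g := fun x => g x / N) (h := fun x => h x / (M ^ a * N ^ b)) (hf.div_const M)
    (hg.div_const N) (hh.div_const _)
    (fun x => ENNReal.div_ne_top (ne_top_of_le_ne_top hf' (le_iSup f x)) hM₀)
    (fun x => ENNReal.div_ne_top (ne_top_of_le_ne_top hg' (le_iSup g x)) hN₀)
    (fun x => ENNReal.div_ne_top (hh' x) hMN₀) ha hb
    (by rw [← ENNReal.iSup_div, ← ENNReal.iSup_div, ENNReal.div_self hM₀ hf',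
      ENNReal.div_self hN₀ hg'])
    (fun x y => (min_le_rpow_mul_rpow ha.le hb.le hab _ _).trans <| by
      rw [div_rpow_mul_div_rpow ha.le hb.le _ _ hM₀ hf']
      exact ENNReal.div_le_div_right (hfgh x y) _)
  rw [lintegral_div_const hf, lintegral_div_const hg, lintegral_div_const hh] at hnormalized
  have hdiv := (rpow_mul_rpow_le_ofReal_mul_add_ofReal_mul ha hb hab _ _).trans hnormalized
  rwa [div_rpow_mul_div_rpow ha.le hb.le _ _ hM₀ hf', ENNReal.div_le_iff hMN₀ hMN',
    ENNReal.div_mul_cancel hMN₀ hMN'] at hdiv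

end PrekopaLeindler

section LogConcaveMeasure

/-- A measure on a real topological vector space is log-concave if it satisfies the multiplicative
Brunn–Minkowski inequality. The inequality is only required of compact sets because the Minkowski
sum of two measurable sets need not be measurable. -/
def IsLogConcaveMeasure {E : Type*} [AddCommGroup E] [Module ℝ E] [TopologicalSpace E]
    [MeasurableSpace E] (μ : Measure E) : Prop :=
  ∀ ⦃A B : Set E⦄, IsCompact A → IsCompact B → ∀ ⦃a b : ℝ⦄, 0 < a → 0 < b → a + b = 1 →
    μ A ^ a * μ B ^ b ≤ μ (a • A + b • B)

theorem isLogConcaveMeasure_of_subsingleton {E : Type*} [AddCommGroup E] [Module ℝ E]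
    [TopologicalSpace E] [MeasurableSpace E] [Subsingleton E] (μ : Measure E) :
    IsLogConcaveMeasure μ := by
  intro A B _ _ a b ha hb hab
  rcases A.eq_empty_or_nonempty with rfl | hA
  · simp [ha]
  rcases B.eq_empty_or_nonempty with rfl | hB
  · simp [hb]
  rw [hA.eq_univ, hB.eq_univ, (univ_nonempty.smul_set.add univ_nonempty.smul_set).eq_univ,
    ← ENNReal.rpow_add_of_nonneg a b ha.le hb.le, hab, ENNReal.rpow_one]

namespace IsLogConcaveMeasure

theorem smul {E : Type*} [AddCommGroup E] [Module ℝ E] [TopologicalSpace E] [MeasurableSpace E]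
    {μ : Measure E} (hμ : IsLogConcaveMeasure μ) (c : ℝ≥0∞) : IsLogConcaveMeasure (c • μ) := by
  intro A B hA hB a b ha hb hab
  simp only [Measure.smul_apply, smul_eq_mul, ENNReal.mul_rpow_of_nonneg _ _ ha.le,
    ENNReal.mul_rpow_of_nonneg _ _ hb.le]
  calc c ^ a * μ A ^ a * (c ^ b * μ B ^ b)
      = c ^ (a + b) * (μ A ^ a * μ B ^ b) := by
        rw [ENNReal.rpow_add_of_nonneg a b ha.le hb.le, mul_mul_mul_comm]
    _ ≤ c * μ (a • A + b • B) := by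
        rw [hab, ENNReal.rpow_one]
        gcongr
        exact hμ hA hB ha hb hab

theorem map {E F : Type*} [AddCommGroup E] [Module ℝ E] [TopologicalSpace E] [MeasurableSpace E]
    [BorelSpace E] [AddCommGroup F] [Module ℝ F] [TopologicalSpace F] [MeasurableSpace F]
    [BorelSpace F] {μ : Measure E} (hμ : IsLogConcaveMeasure μ) (e : E ≃L[ℝ] F) :
    IsLogConcaveMeasure (μ.map e) := by
  have map_apply (A : Set F) : μ.map e A = μ (e.symm '' A) := by
    rw [e.symm.image_eq_preimage_symm]
    exact e.toHomeomorph.measurableEmbedding.map_apply μ A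
  intro A B hA hB a b ha hb hab
  rw [map_apply, map_apply, map_apply, image_add, image_smul_set, image_smul_set]
  exact hμ (hA.image e.symm.continuous) (hB.image e.symm.continuous) ha hb hab

end IsLogConcaveMeasure

theorem isCompact_prodMk_preimage {X Y : Type*} [TopologicalSpace X] [TopologicalSpace Y]
    [T1Space X] {A : Set (X × Y)} (hA : IsCompact A) (x : X) : IsCompact (Prod.mk x ⁻¹' A) := by
  have : Prod.mk x ⁻¹' A = Prod.snd '' (A ∩ Prod.fst ⁻¹' {x}) := by
    ext y
    simp
  rw [this]
  exact (hA.inter_right (isClosed_singleton.preimage continuous_fst)).image continuous_snd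

theorem IsLogConcaveMeasure.real_prod {F : Type*} [AddCommGroup F] [Module ℝ F]
    [TopologicalSpace F] [IsTopologicalAddGroup F] [ContinuousSMul ℝ F] [T2Space F]
    [SecondCountableTopology F] [MeasurableSpace F] [BorelSpace F] {ν : Measure F} [SFinite ν]
    [IsFiniteMeasureOnCompacts ν] (hν : IsLogConcaveMeasure ν) :
    IsLogConcaveMeasure ((volume : Measure ℝ).prod ν) := by
  intro A B hA hB a b ha hb hab
  have hAB : IsCompact (a • A + b • B) := (hA.smul a).add (hB.smul b)
  have iSup_slice_ne_top {S : Set (ℝ × F)} (hS : IsCompact S) :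
      (⨆ x, ν (Prod.mk x ⁻¹' S)) ≠ ∞ :=
    ne_top_of_le_ne_top (hS.image continuous_snd).measure_ne_top
      (iSup_le fun x => measure_mono fun y hy => mem_image_of_mem Prod.snd hy)
  rw [Measure.prod_apply hA.measurableSet, Measure.prod_apply hB.measurableSet,
    Measure.prod_apply hAB.measurableSet]
  refine prekopaLeindler_real (measurable_measure_prodMk_left hA.measurableSet)
    (measurable_measure_prodMk_left hB.measurableSet)
    (measurable_measure_prodMk_left hAB.measurableSet) (iSup_slice_ne_top hA)
    (iSup_slice_ne_top hB) (fun x => (isCompact_prodMk_preimage hAB x).measure_ne_top) ha hb hab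
    fun x y => ?_
  refine (hν (isCompact_prodMk_preimage hA x) (isCompact_prodMk_preimage hB y) ha hb hab).trans
    (measure_mono ?_)
  rintro _ ⟨_, ⟨u, hu, rfl⟩, _, ⟨v, hv, rfl⟩, rfl⟩
  exact ⟨_, smul_mem_smul_set hu, _, smul_mem_smul_set hv, rfl⟩

theorem IsLogConcaveMeasure.of_continuousLinearEquiv {E F : Type*} [NormedAddCommGroup E]
    [NormedSpace ℝ E] [MeasurableSpace E] [BorelSpace E] [NormedAddCommGroup F] [NormedSpace ℝ F]
    [FiniteDimensional ℝ F] [MeasurableSpace F] [BorelSpace F] {ν : Measure E}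
    [ν.IsAddHaarMeasure] (hν : IsLogConcaveMeasure ν) (e : E ≃L[ℝ] F) (μ : Measure F)
    [μ.IsAddHaarMeasure] : IsLogConcaveMeasure μ := by
  have : (ν.map e).IsAddHaarMeasure := e.isAddHaarMeasure_map ν
  rw [Measure.isAddLeftInvariant_eq_smul μ (ν.map e)]
  exact (hν.map e).smul _

theorem isLogConcaveMeasure_volume_pi (n : ℕ) :
    IsLogConcaveMeasure (volume : Measure (Fin n → ℝ)) := by
  induction n with
  | zero => exact isLogConcaveMeasure_of_subsingleton _
  | succ n ih => exact ih.real_prod.of_continuousLinearEquiv (Fin.consEquivL ℝ fun _ => ℝ) volume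

theorem isLogConcaveMeasure_of_isAddHaarMeasure {E : Type*} [NormedAddCommGroup E]
    [NormedSpace ℝ E] [FiniteDimensional ℝ E] [MeasurableSpace E] [BorelSpace E] (μ : Measure E)
    [μ.IsAddHaarMeasure] : IsLogConcaveMeasure μ :=
  (isLogConcaveMeasure_volume_pi (finrank ℝ E)).of_continuousLinearEquiv
    (.ofFinrankEq (finrank_fin_fun ℝ)) μ

end LogConcaveMeasure

section VolumeRadius

variable {E : Type*} [NormedAddCommGroup E] [NormedSpace ℝ E] [MeasurableSpace E]

/-- The radius of a centred ball with the measure of `A`, in units where the ball of radius `1` has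
measure `1`. In these terms the Brunn–Minkowski inequality is superadditivity. -/
noncomputable def volumeRadius (μ : Measure E) (A : Set E) : ℝ :=
  μ.real A ^ (finrank ℝ E : ℝ)⁻¹

variable {A B : Set E}

theorem volumeRadius_nonneg (μ : Measure E) (A : Set E) : 0 ≤ volumeRadius μ A :=
  Real.rpow_nonneg measureReal_nonneg _

theorem volumeRadius_mono {μ : Measure E} (hAB : A ⊆ B) (hB : μ B ≠ ∞) :
    volumeRadius μ A ≤ volumeRadius μ B :=
  Real.rpow_le_rpow measureReal_nonneg (measureReal_mono hAB hB) (by positivity)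

theorem volumeRadius_le_volumeRadius_add {μ : Measure E} [μ.IsAddHaarMeasure] (hA : IsCompact A)
    (hB : IsCompact B) (hA₀ : A.Nonempty) : volumeRadius μ B ≤ volumeRadius μ (A + B) := by
  obtain ⟨x, hx⟩ := hA₀
  calc volumeRadius μ B = volumeRadius μ (x +ᵥ B) := by
        rw [volumeRadius, volumeRadius, measureReal_def, measureReal_def, measure_vadd]
    _ ≤ volumeRadius μ (A + B) :=
        volumeRadius_mono (vadd_set_subset_add hx) (hA.add hB).measure_ne_top

variable [FiniteDimensional ℝ E] [Nontrivial E]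

theorem volumeRadius_empty (μ : Measure E) : volumeRadius μ ∅ = 0 := by
  have hd : (finrank ℝ E : ℝ) ≠ 0 := by exact_mod_cast finrank_pos.ne'
  rw [volumeRadius, measureReal_empty, Real.zero_rpow (inv_ne_zero hd)]

theorem volumeRadius_pow (μ : Measure E) (A : Set E) :
    volumeRadius μ A ^ finrank ℝ E = μ.real A :=
  Real.rpow_inv_natCast_pow measureReal_nonneg finrank_pos.ne'

variable [BorelSpace E] (μ : Measure E) [μ.IsAddHaarMeasure]

theorem volumeRadius_smul (r : ℝ) (A : Set E) :
    volumeRadius μ (r • A) = |r| * volumeRadius μ A := by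
  rw [volumeRadius, volumeRadius, measureReal_def, Measure.addHaar_smul, ENNReal.toReal_mul,
    ENNReal.toReal_ofReal (abs_nonneg _), Real.mul_rpow (abs_nonneg _) ENNReal.toReal_nonneg,
    abs_pow, Real.pow_rpow_inv_natCast (abs_nonneg r) finrank_pos.ne', measureReal_def]

theorem volumeRadius_neg (A : Set E) : volumeRadius μ (-A) = volumeRadius μ A := by
  rw [← one_smul ℝ A, ← neg_smul_set, volumeRadius_smul, volumeRadius_smul, abs_neg]

variable {μ}

theorem one_le_volumeRadius_smul_add_smul (hA : IsCompact A) (hB : IsCompact B)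
    (hAr : volumeRadius μ A = 1) (hBr : volumeRadius μ B = 1) {a b : ℝ} (ha : 0 < a) (hb : 0 < b)
    (hab : a + b = 1) : 1 ≤ volumeRadius μ (a • A + b • B) := by
  have measure_eq_one {S : Set E} (hS : volumeRadius μ S = 1) : μ S = 1 := by
    rw [← ENNReal.toReal_eq_one_iff, ← measureReal_def, ← volumeRadius_pow, hS, one_pow]
  have h := isLogConcaveMeasure_of_isAddHaarMeasure μ hA hB ha hb hab
  rw [measure_eq_one hAr, measure_eq_one hBr, ENNReal.one_rpow, ENNReal.one_rpow, one_mul] at h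
  have hfin : μ (a • A + b • B) ≠ ∞ := ((hA.smul a).add (hB.smul b)).measure_ne_top
  exact Real.one_le_rpow (ENNReal.toReal_mono hfin h) (by positivity)

/-- The **Brunn–Minkowski inequality** for compact sets. -/
theorem volumeRadius_add_le (hA : IsCompact A) (hB : IsCompact B) (hA₀ : A.Nonempty)
    (hB₀ : B.Nonempty) : volumeRadius μ A + volumeRadius μ B ≤ volumeRadius μ (A + B) := by
  rcases (volumeRadius_nonneg μ A).eq_or_lt with hα | hα
  · rw [← hα, zero_add]
    exact volumeRadius_le_volumeRadius_add hA hB hA₀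
  rcases (volumeRadius_nonneg μ B).eq_or_lt with hβ | hβ
  · rw [← hβ, add_zero, add_comm A]
    exact volumeRadius_le_volumeRadius_add hB hA hB₀
  set α := volumeRadius μ A
  set β := volumeRadius μ B
  have normalized_radius {S : Set E} (hS : 0 < volumeRadius μ S) :
      volumeRadius μ ((volumeRadius μ S)⁻¹ • S) = 1 := by
    rw [volumeRadius_smul, abs_of_pos (inv_pos.2 hS), inv_mul_cancel₀ hS.ne']
  have h := one_le_volumeRadius_smul_add_smul (hA.smul α⁻¹) (hB.smul β⁻¹) (normalized_radius hα)
    (normalized_radius hβ) (div_pos hα (add_pos hα hβ)) (div_pos hβ (add_pos hα hβ))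
    (by field_simp)
  rw [smul_smul, smul_smul, show α / (α + β) * α⁻¹ = (α + β)⁻¹ by field_simp,
    show β / (α + β) * β⁻¹ = (α + β)⁻¹ by field_simp, ← smul_add, volumeRadius_smul,
    abs_of_pos (by positivity)] at h
  rwa [← div_eq_inv_mul, one_le_div (add_pos hα hβ)] at h

theorem volumeRadius_minkowskiDiff_le {C D : Set E} (hC : IsCompact C) (hD : IsCompact D)
    (hC₀ : C.Nonempty) (hDC : (minkowskiDiff D C).Nonempty) :
    volumeRadius μ (minkowskiDiff D C) ≤ volumeRadius μ D - volumeRadius μ C :=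
  le_sub_iff_add_le.2 <|
    (volumeRadius_add_le (isCompact_minkowskiDiff hD hC₀) hC hDC hC₀).trans
      (volumeRadius_mono (minkowskiDiff_add_subset D C) hD.measure_ne_top)

theorem measureReal_minkowskiDiff_le {C D : Set E} (hC : IsCompact C) (hD : IsCompact D)
    (hC₀ : C.Nonempty) :
    μ.real (minkowskiDiff D C) ≤ max (volumeRadius μ D - volumeRadius μ C) 0 ^ finrank ℝ E := by
  rcases (minkowskiDiff D C).eq_empty_or_nonempty with hempty | hDC
  · rw [hempty, measureReal_empty]
    positivity
  · rw [← volumeRadius_pow]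
    gcongr
    · exact volumeRadius_nonneg μ _
    · exact le_max_of_le_left (volumeRadius_minkowskiDiff_le hC hD hC₀ hDC)

end VolumeRadius

section FrontierSum

theorem max_sub_zero_pow_add_max_sub_zero_pow {d : ℕ} (hd : d ≠ 0) (x y : ℝ) :
    max (x - y) 0 ^ d + max (y - x) 0 ^ d = |x - y| ^ d := by
  wlog hyx : y ≤ x generalizing x y
  · rw [add_comm, abs_sub_comm]
    exact this y x (le_of_not_ge hyx)
  rw [max_eq_left (sub_nonneg.2 hyx), max_eq_right (sub_nonpos.2 hyx), zero_pow hd, add_zero,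
    abs_of_nonneg (sub_nonneg.2 hyx)]

variable {E : Type*} [NormedAddCommGroup E] [NormedSpace ℝ E] [FiniteDimensional ℝ E]
  [Nontrivial E] [MeasurableSpace E] [BorelSpace E] {μ : Measure E} [μ.IsAddHaarMeasure]

theorem measureReal_add_le_of_isPreconnected_frontier {C D : Set E} (hC : IsCompact C)
    (hD : IsCompact D) (hC₀ : C.Nonempty) (hD₀ : D.Nonempty) (hfC : IsPreconnected (frontier C))
    (hfD : IsPreconnected (frontier D)) :
    μ.real (C + D) ≤ μ.real (frontier C + frontier D) +
      |volumeRadius μ C - volumeRadius μ D| ^ finrank ℝ E := by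
  have : NoncompactSpace E := NormedSpace.noncompactSpace ℝ E
  have isCompact_frontier {S : Set E} (hS : IsCompact S) : IsCompact (frontier S) :=
    hS.of_isClosed_subset isClosed_frontier hS.isClosed.frontier_subset
  have hcompact : IsCompact
      (frontier C + frontier D ∪ (minkowskiDiff D (-C) ∪ minkowskiDiff C (-D))) :=
    ((isCompact_frontier hC).add (isCompact_frontier hD)).union
      ((isCompact_minkowskiDiff hD hC₀.neg).union (isCompact_minkowskiDiff hC hD₀.neg))
  calc μ.real (C + D)
      ≤ μ.real (frontier C + frontier D ∪ (minkowskiDiff D (-C) ∪ minkowskiDiff C (-D))) :=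
        measureReal_mono (add_subset_frontier_add_frontier_union hC hD hfC hfD)
          hcompact.measure_ne_top
    _ ≤ μ.real (frontier C + frontier D) +
          (μ.real (minkowskiDiff D (-C)) + μ.real (minkowskiDiff C (-D))) :=
        (measureReal_union_le _ _).trans (by gcongr; exact measureReal_union_le _ _)
    _ ≤ μ.real (frontier C + frontier D) +
          |volumeRadius μ C - volumeRadius μ D| ^ finrank ℝ E := by
        rw [abs_sub_comm, ← max_sub_zero_pow_add_max_sub_zero_pow finrank_pos.ne']
        gcongr
        · exact volumeRadius_neg μ C ▸ measureReal_minkowskiDiff_le hC.neg hD hC₀.neg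
        · exact volumeRadius_neg μ D ▸ measureReal_minkowskiDiff_le hD.neg hC hD₀.neg

theorem shellVolume_le_measureReal_frontier_add_frontier {C D : Set E} (hC : IsCompact C)
    (hD : IsCompact D) (hfC : IsPreconnected (frontier C)) (hfD : IsPreconnected (frontier D)) :
    shellVolume (finrank ℝ E) (volumeRadius μ C) (volumeRadius μ D) ≤
      μ.real (frontier C + frontier D) := by
  rcases C.eq_empty_or_nonempty with rfl | hC₀
  · rw [volumeRadius_empty, shellVolume_zero_left _ (volumeRadius_nonneg μ D)]
    exact measureReal_nonneg
  rcases D.eq_empty_or_nonempty with rfl | hD₀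
  · rw [volumeRadius_empty, shellVolume_comm, shellVolume_zero_left _ (volumeRadius_nonneg μ C)]
    exact measureReal_nonneg
  rw [shellVolume, sub_le_iff_le_add]
  calc (volumeRadius μ C + volumeRadius μ D) ^ finrank ℝ E
      ≤ volumeRadius μ (C + D) ^ finrank ℝ E := by
        gcongr
        · exact add_nonneg (volumeRadius_nonneg μ C) (volumeRadius_nonneg μ D)
        · exact volumeRadius_add_le hC hD hC₀ hD₀
    _ = μ.real (C + D) := volumeRadius_pow μ (C + D)
    _ ≤ μ.real (frontier C + frontier D) +
          |volumeRadius μ C - volumeRadius μ D| ^ finrank ℝ E :=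
        measureReal_add_le_of_isPreconnected_frontier hC hD hC₀ hD₀ hfC hfD

theorem shellVolume_le_measureReal_smul_frontier_add {K T : Set E} (hK : IsCompact K)
    (hT : IsCompact T) (hfK : IsPreconnected (frontier K)) (hfT : IsPreconnected (frontier T))
    {l m : ℝ} (hl : 0 < l) (hm : 0 < m) :
    shellVolume (finrank ℝ E) (l * volumeRadius μ K) (m * volumeRadius μ T) ≤
      μ.real (l • frontier K + m • frontier T) := by
  have frontier_smul {r : ℝ} (hr : 0 < r) (S : Set E) : frontier (r • S) = r • frontier S :=
    ((Homeomorph.smulOfNeZero r hr.ne').image_frontier S).symm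
  have isPreconnected_frontier_smul {r : ℝ} (hr : 0 < r) {S : Set E}
      (hS : IsPreconnected (frontier S)) : IsPreconnected (frontier (r • S)) :=
    frontier_smul hr S ▸ hS.image _ (continuous_const_smul r).continuousOn
  have h := shellVolume_le_measureReal_frontier_add_frontier (μ := μ) (hK.smul l) (hT.smul m)
    (isPreconnected_frontier_smul hl hfK) (isPreconnected_frontier_smul hm hfT)
  rwa [volumeRadius_smul, volumeRadius_smul, abs_of_pos hl, abs_of_pos hm, frontier_smul hl,
    frontier_smul hm] at h

end FrontierSum

theorem boundary_BBM_inequality_general {E : Type*} [NormedAddCommGroup E] [NormedSpace ℝ E]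
    [FiniteDimensional ℝ E] [MeasurableSpace E] [BorelSpace E] (μ : Measure E)
    [μ.IsAddHaarMeasure] (hE : 2 ≤ finrank ℝ E) {K T : Set E} (hK : IsCompact K)
    (hT : IsCompact T) (hfK : IsPreconnected (frontier K)) (hfT : IsPreconnected (frontier T))
    {l m : ℝ} (hl : 0 < l) (hm : 0 < m) :
    μ.real K * μ.real T * ((l + m) ^ finrank ℝ E - |l - m| ^ finrank ℝ E) ^ 2 ≤
      μ.real (l • frontier K + m • frontier T) * μ.real (l • frontier T + m • frontier K) := by
  have : Nontrivial E := nontrivial_of_finrank_pos (R := ℝ) (by lia)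
  have hk := volumeRadius_nonneg μ K
  have ht := volumeRadius_nonneg μ T
  calc μ.real K * μ.real T * ((l + m) ^ finrank ℝ E - |l - m| ^ finrank ℝ E) ^ 2
      = (volumeRadius μ K * volumeRadius μ T) ^ finrank ℝ E *
          shellVolume (finrank ℝ E) l m ^ 2 := by
        rw [mul_pow, volumeRadius_pow, volumeRadius_pow, shellVolume]
    _ ≤ shellVolume (finrank ℝ E) (l * volumeRadius μ K) (m * volumeRadius μ T) *
          shellVolume (finrank ℝ E) (l * volumeRadius μ T) (m * volumeRadius μ K) :=
        mul_pow_mul_shellVolume_sq_le hE hl.le hm.le hk ht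
    _ ≤ μ.real (l • frontier K + m • frontier T) * μ.real (l • frontier T + m • frontier K) :=
        mul_le_mul (shellVolume_le_measureReal_smul_frontier_add hK hT hfK hfT hl hm)
          (shellVolume_le_measureReal_smul_frontier_add hT hK hfT hfK hl hm)
          (shellVolume_nonneg _ (by positivity) (by positivity)) measureReal_nonneg

theorem boundary_BBM_inequality (n : ℕ) (hn : 2 ≤ n)
    (K T : Set (EuclideanSpace ℝ (Fin n)))
    (hK : IsCompact K) (hT : IsCompact T)
    (hbK : IsConnected (frontier K)) (hbT : IsConnected (frontier T))
    (l : ℝ) (hl0 : 0 < l) (hl1 : l < 1) :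
    (volume (l • frontier K + (1 - l) • frontier T)).toReal *
      (volume (l • frontier T + (1 - l) • frontier K)).toReal ≥
    (volume K).toReal * (volume T).toReal * (1 - |1 - 2*l| ^ n) ^ 2 := by
  have h := boundary_BBM_inequality_general volume (by rwa [finrank_euclideanSpace_fin]) hK hT
    hbK.isPreconnected hbT.isPreconnected hl0 (sub_pos.2 hl1)
  rwa [finrank_euclideanSpace_fin, add_sub_cancel, one_pow, abs_sub_comm,
    show 1 - l - l = 1 - 2 * l by ring] at h
end
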